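/- arXiv:1007.3572 — 4 statements merged into one kernel-verified Lean document; each statement's English description precedes it below -/
import Mathlib

section
/- Let (G,∘) be a finite group of odd order n with n > 50. Then δ(G,∘) = 6n − 18; that is, the minimum Hamming distance between ∘ and any other group operation on G equals 6n − 18. -/
/-- `star` is a group operation on `G`. -/
def IsGroupOp {G : Type*} (star : G → G → G) : Prop :=
  ∃ (e : G) (inv : G → G),
    (∀ a b c : G, star (star a b) c = star a (star b c)) ∧
    (∀ a : G, star e a = a) ∧ (∀ a : G, star a e = a) ∧
    (∀ a : G, star (inv a) a = e) ∧ (∀ a : G, star a (inv a) = e)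

/-- The Hamming distance between two binary operations on a finite set. -/
def opDist {G : Type*} [Fintype G] [DecidableEq G] (f g : G → G → G) : ℕ :=
  (Finset.univ.filter fun p : G × G => f p.1 p.2 ≠ g p.1 p.2).card

/-- `δ(G,∘)`: the minimum Hamming distance between the group operation of `G`
and any other group operation on `G`. -/
noncomputable def groupDelta (G : Type*) [Group G] [Fintype G] [DecidableEq G] : ℕ :=
  sInf {d : ℕ | ∃ star : G → G → G, IsGroupOp star ∧
    star ≠ (fun a b => a * b) ∧ d = opDist (fun a b : G => a * b) star}

open Finset

universe u

theorem IsGroupOp.exists_group_equiv {α : Type u} {star : α → α → α} (h : IsGroupOp star) :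
    ∃ (H : Type u) (_ : Group H) (f : α ≃ H), ∀ x y, f (star x y) = f x * f y := by
  obtain ⟨e, inv, hassoc, h1, h2, h3, -⟩ := h
  let H : Group α :=
    { mul := star
      one := e
      inv := inv
      mul_assoc := hassoc
      one_mul := h1
      mul_one := h2
      inv_mul_cancel := h3 }
  exact ⟨α, H, Equiv.refl α, fun _ _ => rfl⟩

section

variable {G : Type*} [Group G] [Fintype G]

/-- The pairs at which `f` fails to be multiplicative. -/
def defect {H : Type*} [Mul H] [DecidableEq H] (f : G → H) : Finset (G × G) :=
  univ.filter fun p => f (p.1 * p.2) ≠ f p.1 * f p.2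

/-- The elements `y` such that `f` fails to be multiplicative at `(x, y)`. -/
def rowDefect {H : Type*} [Mul H] [DecidableEq H] (f : G → H) (x : G) : Finset G :=
  univ.filter fun y => f (x * y) ≠ f x * f y

theorem card_defect {H : Type*} [Mul H] [DecidableEq H] (f : G → H) :
    (defect f).card = ∑ x, (rowDefect f x).card := by
  simp only [defect, rowDefect, card_filter, ← Fintype.sum_prod_type']

/-- The locally most common value of `f (x * y) * (f y)⁻¹`. -/
theorem exists_popular_value {H : Type*} [Group H] [DecidableEq H] (f : G → H)
    (hf : 9 * (defect f).card < Fintype.card G ^ 2) (x : G) :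
    ∃ h : H, 9 * (univ.filter fun y => f (x * y) ≠ h * f y).card < 2 * Fintype.card G := by
  classical
  by_contra! hc
  let B : Finset (G × G) := univ.filter fun p => f (x * p.2) ≠ f (x * p.1) * (f p.1)⁻¹ * f p.2
  have hB : B.card ≤ 2 * (defect f).card := by
    have h1 : B ⊆ ((defect f).image fun p => (x⁻¹ * p.1, x⁻¹ * p.1 * p.2)) ∪
        (defect f).image fun p => (p.1, p.1 * p.2) := by
      rintro ⟨z, y⟩ hp
      simp only [B, mem_filter, mem_univ, true_and] at hp
      simp only [mem_union, mem_image, defect, mem_filter, mem_univ, true_and, Prod.exists,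
        Prod.mk.injEq]
      by_cases h2 : f y = f z * f (z⁻¹ * y)
      · left
        refine ⟨x * z, z⁻¹ * y, ?_, by group, by group⟩
        intro h3
        apply hp
        rw [h2]
        rw [show x * z * (z⁻¹ * y) = x * y by group] at h3
        rw [h3]; group
      · right
        exact ⟨z, z⁻¹ * y, by simpa using h2, rfl, by group⟩
    calc B.card ≤ _ := card_le_card h1
      _ ≤ _ := card_union_le _ _
      _ ≤ (defect f).card + (defect f).card := add_le_add card_image_le card_image_le
      _ = _ := by ring
  have hs : B.card = ∑ z, (univ.filter fun y => f (x * y) ≠ f (x * z) * (f z)⁻¹ * f y).card := by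
    simp only [B, card_filter, ← Fintype.sum_prod_type']
  have h3 : ∑ _z : G, 2 * Fintype.card G ≤ 9 * B.card := by
    rw [hs, mul_sum]
    exact sum_le_sum fun z _ => hc _
  simp only [sum_const, card_univ, smul_eq_mul] at h3
  nlinarith

/-- A map between groups with small multiplicative defect is close to a homomorphism. -/
theorem exists_monoidHom_of_card_defect_lt {H : Type*} [Group H] [DecidableEq H] (f : G → H)
    (hf : 9 * (defect f).card < Fintype.card G ^ 2) :
    ∃ g : G →* H, ∀ x,
      9 * (univ.filter fun y => f (x * y) ≠ g x * f y).card < 2 * Fintype.card G := by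
  classical
  choose g hg using exists_popular_value f hf
  refine ⟨MonoidHom.mk' g fun x y => ?_, hg⟩
  let E (a : G) : Finset G := univ.filter fun z => f (a * z) ≠ g a * f z
  have hE : ((E (x * y)) ∪ (E y) ∪ ((E x).image fun z => y⁻¹ * z)).card < Fintype.card G := by
    have h1 := card_union_le (E (x * y) ∪ E y) ((E x).image fun z => y⁻¹ * z)
    have h2 := card_union_le (E (x * y)) (E y)
    have h3 : ((E x).image fun z => y⁻¹ * z).card ≤ (E x).card := card_image_le
    have hx : 9 * (E x).card < _ := hg x
    have hy : 9 * (E y).card < _ := hg y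
    have hxy : 9 * (E (x * y)).card < _ := hg (x * y)
    omega
  obtain ⟨z, hz⟩ : ∃ z, z ∉ (E (x * y)) ∪ (E y) ∪ ((E x).image fun z => y⁻¹ * z) := by
    by_contra! hc
    rw [eq_univ_iff_forall.2 hc, card_univ] at hE
    exact lt_irrefl _ hE
  simp only [mem_union, not_or, mem_image, not_exists, not_and, E, mem_filter, mem_univ,
    true_and, not_not] at hz
  obtain ⟨⟨h1, h2⟩, h3⟩ := hz
  have h4 : f (x * (y * z)) = g x * f (y * z) := by
    by_contra h
    exact h3 _ h (by group)
  rw [← mul_assoc, h1, h2, ← mul_assoc] at h4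
  exact mul_right_cancel h4

theorem card_mul_le_card_defect {H : Type*} [Group H] [DecidableEq H] (f : G → H) (g : G → H)
    (hg : ∀ x, 9 * (univ.filter fun y => f (x * y) ≠ g x * f y).card < 2 * Fintype.card G) :
    7 * Fintype.card G * (univ.filter fun x => g x ≠ f x).card ≤ 9 * (defect f).card := by
  classical
  have h1 : ∀ x ∈ univ.filter (fun x => g x ≠ f x),
      7 * Fintype.card G ≤ 9 * (rowDefect f x).card := by
    intro x hx
    have hx' : g x ≠ f x := by simpa using hx
    have h2 : (univ : Finset G) ⊆ rowDefect f x ∪ univ.filter fun y => f (x * y) ≠ g x * f y := by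
      intro y _
      simp only [rowDefect, mem_union, mem_filter, mem_univ, true_and]
      by_contra! hc
      exact hx' (mul_right_cancel (hc.2.symm.trans hc.1))
    have h3 := (card_le_card h2).trans (card_union_le _ _)
    have h4 := hg x
    rw [card_univ] at h3
    omega
  calc _ = ∑ x ∈ univ.filter (fun x => g x ≠ f x), 7 * Fintype.card G := by
        rw [sum_const, smul_eq_mul, mul_comm]
    _ ≤ ∑ x ∈ univ.filter (fun x => g x ≠ f x), 9 * (rowDefect f x).card := sum_le_sum h1
    _ ≤ ∑ x, 9 * (rowDefect f x).card := sum_le_sum_of_subset (subset_univ _)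
    _ = _ := by rw [card_defect, mul_sum]

/-- A bijection between groups with small multiplicative defect agrees with an isomorphism,
up to a permutation with small support. -/
theorem exists_perm_of_card_defect_lt [DecidableEq G] {H : Type*} [Group H] [DecidableEq H]
    (f : G ≃ H) (hn : 50 < Fintype.card G)
    (hf : (defect f).card < 6 * Fintype.card G - 18) :
    ∃ τ : Equiv.Perm G, τ.support.card ≤ 7 ∧
      ∀ x y, f (x * y) = f x * f y ↔ τ (x * y) = τ x * τ y := by
  obtain ⟨g, hg⟩ := exists_monoidHom_of_card_defect_lt f (by
    have : 6 * Fintype.card G ≤ (Fintype.card G ^ 2) / 9 + 18 := by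
      have : 51 ≤ Fintype.card G := hn
      have : 9 * (6 * Fintype.card G) ≤ Fintype.card G ^ 2 + 18 * 9 := by nlinarith
      omega
    omega)
  have hM := card_mul_le_card_defect f g hg
  have hM7 : (univ.filter fun x => g x ≠ f x).card ≤ 7 := by
    by_contra! hc
    have : 7 * Fintype.card G * 8 ≤ 7 * Fintype.card G * (univ.filter fun x => g x ≠ f x).card :=
      Nat.mul_le_mul_left _ hc
    omega
  have hinj : Function.Injective g := by
    rw [injective_iff_map_eq_one]
    intro x hx
    by_contra hx1
    let M := univ.filter fun x => g x ≠ f x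
    have hc : (M ∪ M.image fun y => x⁻¹ * y).card < Fintype.card G := by
      have h1 := card_union_le M (M.image fun y => x⁻¹ * y)
      have h2 : (M.image fun y => x⁻¹ * y).card ≤ M.card := card_image_le
      have h3 : M.card ≤ 7 := hM7
      omega
    obtain ⟨y, hy⟩ : ∃ y, y ∉ M ∪ M.image fun y => x⁻¹ * y := by
      by_contra! hc'
      rw [eq_univ_iff_forall.2 hc', card_univ] at hc
      exact lt_irrefl _ hc
    simp only [mem_union, not_or, mem_image, not_exists, not_and, M, mem_filter, mem_univ,
      true_and, not_not] at hy
    have h4 : g (x * y) = f (x * y) := by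
      by_contra h
      exact hy.2 _ h (by group)
    rw [map_mul, hx, one_mul, hy.1] at h4
    exact hx1 (by simpa using f.injective h4)
  have : Finite H := Finite.of_equiv G f
  have hbij : Function.Bijective g :=
    (Nat.bijective_iff_injective_and_card g).2 ⟨hinj, Nat.card_congr f⟩
  let e : G ≃ H := Equiv.ofBijective g hbij
  have he : ∀ x, e x = g x := fun _ => rfl
  refine ⟨f.trans e.symm, ?_, fun x y => ?_⟩
  · refine le_trans (card_le_card fun x hx => ?_) hM7
    simp only [Equiv.Perm.mem_support, Equiv.trans_apply, ne_eq, Equiv.symm_apply_eq, he] at hx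
    simpa using Ne.symm hx
  · have h : ∀ x, f x = g ((f.trans e.symm) x) := fun x => by
      rw [← he]; simp
    rw [h x, h y, h (x * y), ← map_mul, hinj.eq_iff]


theorem mul_self_injective_of_odd_card (hodd : Odd (Fintype.card G)) {x y : G}
    (h : x * x = y * y) : x = y := by
  have hc : (Nat.card G).Coprime 2 := by
    rw [Nat.card_eq_fintype_card]; exact Nat.coprime_two_right.2 hodd
  exact (powCoprime hc).injective (by simpa [pow_two] using h)

theorem eq_one_of_mul_self_eq_one (hodd : Odd (Fintype.card G)) {x : G} (h : x * x = 1) :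
    x = 1 :=
  mul_self_injective_of_odd_card hodd (by simpa using h)

variable [DecidableEq G]

theorem card_le_card_notMem_and_notMem {α : Type*} [Fintype α] [DecidableEq α] (M : Finset α)
    (s : Equiv.Perm α) :
    Fintype.card α ≤ (univ.filter fun y => y ∉ M ∧ s y ∉ M).card + 2 * M.card := by
  have h1 : (univ : Finset α) ⊆ (univ.filter fun y => y ∉ M ∧ s y ∉ M) ∪
      (M ∪ M.image s.symm) := by
    intro y _
    simp only [mem_union, mem_filter, mem_univ, true_and, mem_image]
    by_cases h : y ∈ M
    · exact Or.inr (Or.inl h)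
    by_cases h' : s y ∈ M
    · exact Or.inr (Or.inr ⟨_, h', by simp⟩)
    · exact Or.inl ⟨h, h'⟩
  have h2 := card_le_card h1
  have h3 := card_union_le (univ.filter fun y => y ∉ M ∧ s y ∉ M) (M ∪ M.image s.symm)
  have h4 := card_union_le M (M.image s.symm)
  have h5 : (M.image s.symm).card ≤ M.card := card_image_le
  rw [card_univ] at h2
  omega

theorem card_mul_le_card_sigma {α : Type*} [Fintype α] [DecidableEq α] (M : Finset α)
    (s : α → Equiv.Perm α) :
    M.card * (Fintype.card α - 2 * M.card) ≤
      (M.sigma fun x => univ.filter fun y => y ∉ M ∧ s x y ∉ M).card := by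
  rw [card_sigma, ← smul_eq_mul]
  refine card_nsmul_le_sum _ _ _ fun x _ => ?_
  have := card_le_card_notMem_and_notMem M (s x)
  omega

/-- Every product with exactly one of its three terms moved by `τ` is a defect of `τ`. -/
theorem card_support_mul_le_card_defect (τ : Equiv.Perm G) :
    3 * (τ.support.card * (Fintype.card G - 2 * τ.support.card)) ≤ (defect τ).card := by
  let M := τ.support
  have hM : ∀ x, x ∉ M ↔ τ x = x := fun x => Equiv.Perm.notMem_support
  let A : Finset (G × G) := univ.filter fun p => p.1 ∈ M ∧ p.2 ∉ M ∧ p.1 * p.2 ∉ M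
  let B : Finset (G × G) := univ.filter fun p => p.1 ∉ M ∧ p.2 ∈ M ∧ p.1 * p.2 ∉ M
  let C : Finset (G × G) := univ.filter fun p => p.1 ∉ M ∧ p.2 ∉ M ∧ p.1 * p.2 ∈ M
  have hA : M.card * (Fintype.card G - 2 * M.card) ≤ A.card := by
    refine (card_mul_le_card_sigma M Equiv.mulLeft).trans
      (card_le_card_of_injOn (fun p => (p.1, p.2)) ?_ ?_)
    · rintro ⟨x, y⟩ h
      rw [mem_coe, mem_sigma, mem_filter] at h
      simpa [A] using h
    · rintro ⟨x, y⟩ _ ⟨x', y'⟩ _ h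
      simpa using h
  have hB : M.card * (Fintype.card G - 2 * M.card) ≤ B.card := by
    refine (card_mul_le_card_sigma M Equiv.mulRight).trans
      (card_le_card_of_injOn (fun p => (p.2, p.1)) ?_ ?_)
    · rintro ⟨x, y⟩ h
      rw [mem_coe, mem_sigma, mem_filter] at h
      simp [B] at h ⊢
      tauto
    · rintro ⟨x, y⟩ _ ⟨x', y'⟩ _ h
      simpa [and_comm] using h
  have hC : M.card * (Fintype.card G - 2 * M.card) ≤ C.card := by
    refine (card_mul_le_card_sigma M
      fun z => (Equiv.inv G).trans (Equiv.mulRight z)).trans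
      (card_le_card_of_injOn (fun p => (p.2, p.2⁻¹ * p.1)) ?_ ?_)
    · rintro ⟨x, y⟩ h
      rw [mem_coe, mem_sigma, mem_filter] at h
      simp [C] at h ⊢
      tauto
    · rintro ⟨x, y⟩ _ ⟨x', y'⟩ _ h
      simp only [Prod.mk.injEq] at h
      obtain ⟨rfl, h⟩ := h
      simpa using h
  have hAB : Disjoint A B := by
    rw [disjoint_left]; intro p; simp only [A, B, mem_filter]; tauto
  have hABC : Disjoint (A ∪ B) C := by
    rw [disjoint_left]; intro p; simp only [A, B, C, mem_filter, mem_union]; tauto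
  have hsub : A ∪ B ∪ C ⊆ defect τ := by
    rintro ⟨x, y⟩ h
    simp only [defect, A, B, C, mem_filter, mem_union, mem_univ, true_and] at h ⊢
    intro he
    rcases h with (⟨h1, h2, h3⟩ | ⟨h1, h2, h3⟩) | ⟨h1, h2, h3⟩
    · rw [hM] at h2 h3
      rw [h2, h3] at he
      exact (hM x).not.1 (not_not.2 h1) (mul_right_cancel he).symm
    · rw [hM] at h1 h3
      rw [h1, h3] at he
      exact (hM y).not.1 (not_not.2 h2) (mul_left_cancel he).symm
    · rw [hM] at h1 h2
      rw [h1, h2] at he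
      exact (hM _).not.1 (not_not.2 h3) he
  have := card_le_card hsub
  rw [card_union_of_disjoint hABC, card_union_of_disjoint hAB] at this
  change 3 * (M.card * (Fintype.card G - 2 * M.card)) ≤ _
  omega

theorem rowDefect_swap (hodd : Odd (Fintype.card G)) {u v x : G} (huv : u ≠ v)
    (hx : x ∉ ({1, u, v} : Finset G)) :
    rowDefect (Equiv.swap u v) x = {u, v, x⁻¹ * u, x⁻¹ * v} := by
  simp only [mem_insert, mem_singleton, not_or] at hx
  obtain ⟨h1, hu, hv⟩ := hx
  have hxx : x * x ≠ 1 := fun h => h1 (eq_one_of_mul_self_eq_one hodd h)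
  ext y
  simp only [rowDefect, mem_filter, mem_univ, true_and, mem_insert, mem_singleton,
    Equiv.swap_apply_of_ne_of_ne hu hv]
  have e1 : y = x⁻¹ * u ↔ x * y = u := eq_inv_mul_iff_mul_eq
  have e2 : y = x⁻¹ * v ↔ x * y = v := eq_inv_mul_iff_mul_eq
  rw [e1, e2]
  by_cases a : y = u
  · subst a
    simp only [Equiv.swap_apply_left, true_or, iff_true]
    rw [Equiv.swap_apply_def]
    split_ifs with c d
    · exact absurd c (by simpa using h1)
    · intro h
      have : x * x * y = y := by rw [mul_assoc, d, ← h]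
      exact hxx (by simpa using this)
    · simpa using huv
  by_cases b : y = v
  · subst b
    simp only [Equiv.swap_apply_right, true_or, or_true, iff_true]
    rw [Equiv.swap_apply_def]
    split_ifs with c d
    · intro h
      have : x * x * y = y := by rw [mul_assoc, c, ← h]
      exact hxx (by simpa using this)
    · exact absurd d (by simpa using h1)
    · simpa using huv.symm
  rw [Equiv.swap_apply_of_ne_of_ne a b]
  simp only [a, b, false_or, ne_eq, Equiv.swap_apply_def]
  split_ifs with c d
  · simp [c, huv.symm]
  · simp [d, huv]
  · simp [c, d]

theorem card_rowDefect_swap (hodd : Odd (Fintype.card G)) {u v x : G} (huv : u ≠ v)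
    (hx : x ∉ ({1, u, v} : Finset G)) :
    (rowDefect (Equiv.swap u v) x).card +
      (if x ∈ ({u * v⁻¹, v * u⁻¹} : Finset G) then 1 else 0) = 4 := by
  rw [rowDefect_swap hodd huv hx]
  simp only [mem_insert, mem_singleton, not_or] at hx ⊢
  obtain ⟨h1, -, -⟩ := hx
  have hxx : x * x ≠ 1 := fun h => h1 (eq_one_of_mul_self_eq_one hodd h)
  have e1 : v = x⁻¹ * u ↔ x = u * v⁻¹ := by rw [eq_inv_mul_iff_mul_eq, eq_mul_inv_iff_mul_eq]
  have e2 : u = x⁻¹ * v ↔ x = v * u⁻¹ := by rw [eq_inv_mul_iff_mul_eq, eq_mul_inv_iff_mul_eq]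
  have e3 : u ≠ x⁻¹ * u := by simpa [eq_comm] using h1
  have e4 : v ≠ x⁻¹ * v := by simpa [eq_comm] using h1
  have e5 : x⁻¹ * u ≠ x⁻¹ * v := by simpa using huv
  have e6 : ¬ (v = x⁻¹ * u ∧ u = x⁻¹ * v) := by
    rintro ⟨h, h'⟩
    rw [eq_inv_mul_iff_mul_eq] at h h'
    rw [← h, ← mul_assoc] at h'
    exact hxx (by simpa using h')
  simp only [← e1, ← e2]
  by_cases a : v = x⁻¹ * u
  · have b : u ≠ x⁻¹ * v := fun b => e6 ⟨a, b⟩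
    have : ({u, v, x⁻¹ * u, x⁻¹ * v} : Finset G) = {u, v, x⁻¹ * v} := by
      rw [← a]; simp
    rw [this, card_eq_three.2 ⟨u, v, x⁻¹ * v, huv, b, e4, rfl⟩]
    simp [a]
  by_cases b : u = x⁻¹ * v
  · have : ({u, v, x⁻¹ * u, x⁻¹ * v} : Finset G) = {u, v, x⁻¹ * u} := by
      rw [← b]; ext; simp; tauto
    rw [this, card_eq_three.2 ⟨u, v, x⁻¹ * u, huv, e3, a, rfl⟩]
    simp [b]
  · rw [card_insert_of_notMem, card_eq_three.2 ⟨v, x⁻¹ * u, x⁻¹ * v, a, e4, e5, rfl⟩]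
    · simp [a, b]
    · simp [huv, e3, b]

theorem card_defect_swap (hodd : Odd (Fintype.card G)) {u v : G} (huv : u ≠ v) :
    (defect (Equiv.swap u v)).card + (({u * v⁻¹, v * u⁻¹} : Finset G) \ {1, u, v}).card =
      4 * (Fintype.card G - ({1, u, v} : Finset G).card) +
        ∑ x ∈ ({1, u, v} : Finset G), (rowDefect (Equiv.swap u v) x).card := by
  have h : ∑ x ∈ (({1, u, v} : Finset G))ᶜ, ((rowDefect (Equiv.swap u v) x).card +
      (if x ∈ ({u * v⁻¹, v * u⁻¹} : Finset G) then 1 else 0)) =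
      4 * (Fintype.card G - ({1, u, v} : Finset G).card) := by
    rw [sum_congr rfl fun x hx => card_rowDefect_swap hodd huv (mem_compl.1 hx), sum_const,
      card_compl, smul_eq_mul, mul_comm]
  have h' : (({u * v⁻¹, v * u⁻¹} : Finset G) \ {1, u, v}) =
      (({1, u, v} : Finset G))ᶜ.filter (· ∈ ({u * v⁻¹, v * u⁻¹} : Finset G)) := by
    ext; simp only [mem_sdiff, mem_filter, mem_compl]; tauto
  rw [sum_add_distrib, ← card_filter, ← h'] at h
  rw [card_defect, ← sum_add_sum_compl ({1, u, v} : Finset G), ← h]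
  ring

theorem card_sub_card_le_card_rowDefect (f : G → G) (x : G) (S : Finset G)
    (h : ∀ y ∉ S, f (x * y) ≠ f x * f y) :
    Fintype.card G - S.card ≤ (rowDefect f x).card := by
  rw [← card_compl]
  exact card_le_card fun y hy => by simpa [rowDefect] using h y (mem_compl.1 hy)

theorem card_rowDefect_le_card_sub_card (f : G → G) (x : G) (S : Finset G)
    (h : ∀ y ∈ S, f (x * y) = f x * f y) :
    (rowDefect f x).card ≤ Fintype.card G - S.card := by
  rw [← card_compl]
  refine card_le_card fun y hy => mem_compl.2 fun hS => ?_
  simp only [rowDefect, mem_filter] at hy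
  exact hy.2 (h y hS)

theorem swap_mul_ne (hodd : Odd (Fintype.card G)) {u v y : G} (huv : u ≠ v)
    (h1 : y ≠ 1) (hu : y ≠ u) (hv : y ≠ v) :
    Equiv.swap u v (u * y) ≠ Equiv.swap u v u * Equiv.swap u v y := by
  rw [Equiv.swap_apply_of_ne_of_ne hu hv, Equiv.swap_apply_left, Equiv.swap_apply_def]
  split_ifs with c d
  · simp at c; contradiction
  · intro h
    rw [← d, mul_assoc] at h
    exact h1 (eq_one_of_mul_self_eq_one hodd (by simpa using h.symm))
  · simpa using huv

theorem swap_mul_self_ne (hodd : Odd (Fintype.card G)) {u v : G} (huv : u ≠ v)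
    (h1 : u ≠ 1) (h : ¬ (u * u = v ∧ v * v = u)) :
    Equiv.swap u v (u * u) ≠ Equiv.swap u v u * Equiv.swap u v u := by
  rw [Equiv.swap_apply_left, Equiv.swap_apply_def]
  split_ifs with c d
  · simp at c; contradiction
  · exact fun h' => h ⟨d, h'.symm⟩
  · exact fun h' => huv (mul_self_injective_of_odd_card hodd h')

theorem le_card_rowDefect_swap (hodd : Odd (Fintype.card G)) {u v : G} (huv : u ≠ v) :
    Fintype.card G - 3 ≤ (rowDefect (Equiv.swap u v) u).card := by
  refine le_trans ?_ (card_sub_card_le_card_rowDefect _ u {1, u, v} fun y hy => ?_)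
  · exact Nat.sub_le_sub_left card_le_three _
  · simp only [mem_insert, mem_singleton, not_or] at hy
    exact swap_mul_ne hodd huv hy.1 hy.2.1 hy.2.2

theorem le_card_rowDefect_swap_of_ne (hodd : Odd (Fintype.card G)) {u v : G} (huv : u ≠ v)
    (h1 : u ≠ 1) (h : ¬ (u * u = v ∧ v * v = u)) :
    Fintype.card G - 2 ≤ (rowDefect (Equiv.swap u v) u).card := by
  refine le_trans ?_ (card_sub_card_le_card_rowDefect _ u {1, v} fun y hy => ?_)
  · exact Nat.sub_le_sub_left card_le_two _
  · simp only [mem_insert, mem_singleton, not_or] at hy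
    by_cases hyu : y = u
    · subst hyu
      exact swap_mul_self_ne hodd huv h1 h
    · exact swap_mul_ne hodd huv hy.1 hyu hy.2

theorem le_card_defect_swap_one (hodd : Odd (Fintype.card G)) (hn : 50 < Fintype.card G)
    {v : G} (hv : v ≠ 1) :
    6 * Fintype.card G - 18 ≤ (defect (Equiv.swap 1 v)).card := by
  have h := card_defect_swap hodd hv.symm
  have hrow : Fintype.card G ≤ (rowDefect (Equiv.swap 1 v) 1).card := by
    simpa using card_sub_card_le_card_rowDefect (Equiv.swap 1 v) 1 ∅ fun y _ => by simpa using hv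
  have hrow' : Fintype.card G - 3 ≤ (rowDefect (Equiv.swap 1 v) v).card := by
    rw [Equiv.swap_comm]
    exact le_card_rowDefect_swap hodd hv
  have hT : (({1 * v⁻¹, v * 1⁻¹} : Finset G) \ {1, 1, v}).card ≤ 2 :=
    (card_le_card sdiff_subset).trans card_le_two
  rw [show ({1, 1, v} : Finset G) = {1, v} by simp] at h hT
  rw [sum_pair hv.symm, card_pair hv.symm] at h
  omega

theorem le_card_defect_swap (hodd : Odd (Fintype.card G)) (hn : 50 < Fintype.card G)
    {u v : G} (huv : u ≠ v) :
    6 * Fintype.card G - 18 ≤ (defect (Equiv.swap u v)).card := by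
  by_cases hu : u = 1
  · subst hu
    exact le_card_defect_swap_one hodd hn huv.symm
  by_cases hv : v = 1
  · subst hv
    rw [Equiv.swap_comm]
    exact le_card_defect_swap_one hodd hn huv
  have h := card_defect_swap hodd huv
  rw [sum_insert (by simp [Ne.symm hu, Ne.symm hv]), sum_pair huv,
    card_eq_three.2 ⟨1, u, v, Ne.symm hu, Ne.symm hv, huv, rfl⟩] at h
  by_cases hc : u * u = v ∧ v * v = u
  · have h1 := le_card_rowDefect_swap hodd huv
    have h2 := le_card_rowDefect_swap hodd huv.symm
    rw [Equiv.swap_comm] at h2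
    have h3 : ({u * v⁻¹, v * u⁻¹} : Finset G) \ {1, u, v} = ∅ := by
      have e1 : v * u⁻¹ = u := by rw [← hc.1]; group
      have e2 : u * v⁻¹ = v := by nth_rw 1 [← hc.2]; group
      rw [e1, e2, sdiff_eq_empty_iff_subset]
      intro; simp; tauto
    rw [h3, card_empty] at h
    omega
  · have h1 := le_card_rowDefect_swap_of_ne hodd huv hu hc
    have h2 := le_card_rowDefect_swap_of_ne hodd huv.symm hv (by tauto)
    rw [Equiv.swap_comm] at h2
    have h3 : (({u * v⁻¹, v * u⁻¹} : Finset G) \ {1, u, v}).card ≤ 2 :=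
      (card_le_card sdiff_subset).trans card_le_two
    omega

/-- Swapping an element with its inverse moves few entries of the multiplication table. -/
theorem card_defect_swap_inv_le (hodd : Odd (Fintype.card G)) {u : G} (hu : u ≠ 1) :
    (defect (Equiv.swap u u⁻¹)).card ≤ 6 * Fintype.card G - 18 := by
  have huv : u ≠ u⁻¹ := fun h => hu (eq_one_of_mul_self_eq_one hodd (mul_eq_one_iff_eq_inv.2 h))
  have hv : u⁻¹ ≠ 1 := inv_ne_one.2 hu
  have h := card_defect_swap hodd huv
  have h3 := card_eq_three.2 ⟨1, u, u⁻¹, Ne.symm hu, Ne.symm hv, huv, rfl⟩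
  have hcard : 3 ≤ Fintype.card G := h3 ▸ card_le_univ _
  rw [sum_insert (by simp [Ne.symm hu, hu]), sum_pair huv, h3] at h
  have hone : Equiv.swap u u⁻¹ 1 = 1 := Equiv.swap_apply_of_ne_of_ne (Ne.symm hu) (Ne.symm hv)
  have hd1 := card_rowDefect_le_card_sub_card (Equiv.swap u u⁻¹) 1 univ fun y _ => by simp [hone]
  by_cases hc : u * u = u⁻¹
  · have hc' : u⁻¹ * u⁻¹ = u := by rw [← mul_inv_rev, hc, inv_inv]
    have h1 := card_rowDefect_le_card_sub_card (Equiv.swap u u⁻¹) u {1, u, u⁻¹} fun y hy => by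
      simp only [mem_insert, mem_singleton] at hy
      rcases hy with rfl | rfl | rfl <;> simp [hone, hc, hc']
    have h2 := card_rowDefect_le_card_sub_card (Equiv.swap u u⁻¹) u⁻¹ {1, u, u⁻¹} fun y hy => by
      simp only [mem_insert, mem_singleton] at hy
      rcases hy with rfl | rfl | rfl <;> simp [hone, hc, hc']
    rw [h3] at h1 h2
    rw [card_univ] at hd1
    omega
  · have h1 := card_rowDefect_le_card_sub_card (Equiv.swap u u⁻¹) u {1, u⁻¹} fun y hy => by
      simp only [mem_insert, mem_singleton] at hy
      rcases hy with rfl | rfl <;> simp [hone]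
    have h2 := card_rowDefect_le_card_sub_card (Equiv.swap u u⁻¹) u⁻¹ {1, u} fun y hy => by
      simp only [mem_insert, mem_singleton] at hy
      rcases hy with rfl | rfl <;> simp [hone]
    have hT : (({u * u⁻¹⁻¹, u⁻¹ * u⁻¹} : Finset G) \ {1, u, u⁻¹}).card = 2 := by
      have hne : u * u ≠ u⁻¹ * u⁻¹ := fun h => huv (mul_self_injective_of_odd_card hodd h)
      have hu1 : u * u ≠ 1 := fun h => hu (eq_one_of_mul_self_eq_one hodd h)
      have hv1 : u⁻¹ * u⁻¹ ≠ 1 := fun h => hv (eq_one_of_mul_self_eq_one hodd h)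
      have hc' : u⁻¹ * u⁻¹ ≠ u := fun h => hc (by
        have := congrArg (·⁻¹) h
        simpa using this)
      rw [inv_inv, sdiff_eq_self_of_disjoint, card_pair hne]
      simp [disjoint_left, hu1, hv1, hu, hc, hc']
    rw [card_pair hv.symm] at h1
    rw [card_pair hu.symm] at h2
    rw [card_univ] at hd1
    omega

theorem le_card_defect_of_card_support_le (hodd : Odd (Fintype.card G))
    (hn : 50 < Fintype.card G) {τ : Equiv.Perm G} (hτ : τ ≠ 1) (h7 : τ.support.card ≤ 7) :
    6 * Fintype.card G - 18 ≤ (defect τ).card := by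
  have h2 : 2 ≤ τ.support.card := Equiv.Perm.two_le_card_support_of_ne_one hτ
  by_cases hk : τ.support.card = 2
  · obtain ⟨u, v, huv, rfl⟩ := Equiv.Perm.card_support_eq_two.1 hk
    exact le_card_defect_swap hodd hn huv
  · have h := card_support_mul_le_card_defect τ
    generalize τ.support.card = k at *
    interval_cases k <;> omega

/-- A bijection between groups of odd order that is not an isomorphism has a large defect. -/
theorem le_card_defect_of_not_map_mul {H : Type*} [Group H] [DecidableEq H]
    (hodd : Odd (Fintype.card G)) (hn : 50 < Fintype.card G) (f : G ≃ H)
    (hf : ¬ ∀ x y, f (x * y) = f x * f y) :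
    6 * Fintype.card G - 18 ≤ (defect f).card := by
  by_contra! hlt
  obtain ⟨τ, h7, hτ⟩ := exists_perm_of_card_defect_lt f hn hlt
  have hne : τ ≠ 1 := by
    rintro rfl
    exact hf fun x y => (hτ x y).2 rfl
  have heq : defect f = defect τ := filter_congr fun p _ => not_congr (hτ p.1 p.2)
  rw [heq] at hlt
  exact absurd (le_card_defect_of_card_support_le hodd hn hne h7) (not_le.2 hlt)

theorem le_opDist (hodd : Odd (Fintype.card G)) (hn : 50 < Fintype.card G)
    {star : G → G → G} (hstar : IsGroupOp star) (hne : star ≠ fun a b => a * b) :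
    6 * Fintype.card G - 18 ≤ opDist (fun a b : G => a * b) star := by
  classical
  obtain ⟨H, _, f, hf⟩ := hstar.exists_group_equiv
  have heq : opDist (fun a b : G => a * b) star = (defect f).card := by
    refine congrArg card (filter_congr fun p _ => ?_)
    rw [← hf, f.injective.ne_iff]
  rw [heq]
  refine le_card_defect_of_not_map_mul hodd hn f fun h => hne ?_
  funext x y
  exact f.injective ((hf x y).trans (h x y).symm)

end

theorem IsGroupOp.transport {G : Type*} [Group G] (σ : Equiv.Perm G) :
    IsGroupOp fun x y => σ (σ.symm x * σ.symm y) :=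
  ⟨σ 1, fun a => σ (σ.symm a)⁻¹, fun _ _ _ => by simp [mul_assoc], fun _ => by simp,
    fun _ => by simp, fun _ => by simp, fun _ => by simp⟩

theorem opDist_transport {G : Type*} [Group G] [Fintype G] [DecidableEq G] (σ : Equiv.Perm G) :
    opDist (fun a b : G => a * b) (fun x y => σ (σ.symm x * σ.symm y)) =
      (defect σ.symm).card :=
  congrArg card (filter_congr fun _ _ => not_congr (Equiv.symm_apply_eq σ).symm)

/-- for a finite group `(G,∘)` of odd order `n > 50`,
`δ(G,∘) = 6n − 18`. -/
theorem delta_of_odd_order_group {G : Type*} [Group G] [Fintype G]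
    [DecidableEq G] (n : ℕ) (hcard : Fintype.card G = n)
    (hodd : Odd n) (hn : 50 < n) :
    groupDelta G = 6 * n - 18 := by
  subst hcard
  have : Nontrivial G := Fintype.one_lt_card_iff_nontrivial.1 (by omega)
  obtain ⟨u, hu⟩ := exists_ne (1 : G)
  have huv : u ≠ u⁻¹ := fun h => hu (eq_one_of_mul_self_eq_one hodd (mul_eq_one_iff_eq_inv.2 h))
  let σ := Equiv.swap u u⁻¹
  have hd := opDist_transport σ
  rw [show σ.symm = σ from Equiv.symm_swap u u⁻¹] at hd
  have hne : (fun x y => σ (σ x * σ y)) ≠ fun a b => a * b := by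
    intro h
    have h0 : (defect σ).card = 0 := by
      rw [← hd, h]
      simp [opDist]
    have : _ ≤ (defect σ).card := le_card_defect_swap hodd hn huv
    omega
  have hmem := Nat.sInf_le (s := {d : ℕ | ∃ star : G → G → G, IsGroupOp star ∧
    star ≠ (fun a b => a * b) ∧ d = opDist (fun a b : G => a * b) star})
    ⟨_, IsGroupOp.transport σ, hne, rfl⟩
  apply le_antisymm
  · exact hmem.trans (hd.trans_le (card_defect_swap_inv_le hodd hu))
  · refine le_csInf ⟨_, _, IsGroupOp.transport σ, hne, rfl⟩ ?_
    rintro d ⟨star, hstar, hne, rfl⟩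
    exact le_opDist hodd hn hstar hne
end

section
/- Let (G,∘) be a finite group of order n > 50 which is dihedral of twice odd order, i.e. G is isomorphic to the dihedral group of order 2m for some odd m (so n = 2m). Then δ(G,∘) = 6n − 20. -/
open Finset

namespace IsGroupOp

variable {G : Type*} {star : G → G → G}

theorem assoc (h : IsGroupOp star) (a b c : G) :
    star (star a b) c = star a (star b c) := by
  obtain ⟨e, inv, h1, -⟩ := h
  exact h1 a b c

theorem right_cancel (h : IsGroupOp star) {a b c : G} (hab : star a c = star b c) : a = b := by
  obtain ⟨e, inv, h1, -, h3, -, h5⟩ := h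
  have := congrArg (fun z => star z (inv c)) hab
  simpa [h1, h5, h3] using this

/-- Transporting the multiplication of a group along a permutation gives a group operation. -/
theorem transport_s7 [Group G] (f : Equiv.Perm G) :
    IsGroupOp fun a b : G => f (f.symm a * f.symm b) :=
  ⟨f 1, fun a => f (f.symm a)⁻¹, by simp [mul_assoc]⟩

end IsGroupOp

section RowDistance

variable {G : Type*} [Group G] [Fintype G] [DecidableEq G] {star : G → G → G}

/-- The number of places in which the row of `a` in the table of `G` differs from the row of `b`
in the table of `star`. -/
def rowDist (star : G → G → G) (a b : G) : ℕ :=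
  #{x : G | a * x ≠ star b x}

theorem sum_rowDist_self (star : G → G → G) :
    ∑ a, rowDist star a a = opDist (fun a b : G => a * b) star := by
  simp only [rowDist, opDist, card_filter, Fintype.sum_prod_type]

theorem rowDist_mul_le (h : IsGroupOp star) (a b a' b' : G) :
    rowDist star (a * b) (star a' b') ≤ rowDist star a a' + rowDist star b b' := by
  have hshift : #{x : G | a * (b * x) ≠ star a' (b * x)} = rowDist star a a' :=
    card_bij (fun x _ => b * x) (by simp) (by simp)
      (fun y hy => ⟨b⁻¹ * y, by simpa using hy, by simp⟩)
  rw [← hshift, add_comm, rowDist, rowDist]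
  refine (card_le_card fun x hx => ?_).trans (card_union_le _ _)
  simp only [mem_union, mem_filter, mem_univ, true_and] at hx ⊢
  by_contra! hne
  apply hx
  rw [mul_assoc, hne.2, hne.1, h.assoc]

theorem card_le_rowDist_add_left (h : IsGroupOp star) {a b c : G} (hbc : b ≠ c) :
    Fintype.card G ≤ rowDist star a b + rowDist star a c := by
  rw [← card_univ, rowDist, rowDist]
  refine (card_le_card fun x _ => ?_).trans (card_union_le _ _)
  simp only [mem_union, mem_filter, mem_univ, true_and]
  by_contra! hne
  exact hbc (h.right_cancel (hne.1.symm.trans hne.2))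

theorem card_le_rowDist_add_right {a b c : G} (hab : a ≠ b) :
    Fintype.card G ≤ rowDist star a c + rowDist star b c := by
  rw [← card_univ, rowDist, rowDist]
  refine (card_le_card fun x _ => ?_).trans (card_union_le _ _)
  simp only [mem_union, mem_filter, mem_univ, true_and]
  by_contra! hne
  exact hab (mul_right_cancel (hne.1.trans hne.2.symm))

theorem exists_rowDist_le (h : IsGroupOp star) {c : ℕ}
    (hc : 2 * opDist (fun a b : G => a * b) star < (c + 1) * Fintype.card G) (a : G) :
    ∃ b, rowDist star a b ≤ c := by
  by_contra! hlt
  have hrefl : ∑ b : G, rowDist star (b⁻¹ * a) (b⁻¹ * a) = ∑ b, rowDist star b b :=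
    Fintype.sum_equiv ((Equiv.inv G).trans (Equiv.mulRight a)) _ _ (by simp)
  have hsum : ∑ b : G, (rowDist star b b + rowDist star (b⁻¹ * a) (b⁻¹ * a)) =
      2 * opDist (fun a b : G => a * b) star := by
    rw [sum_add_distrib, hrefl, sum_rowDist_self, two_mul]
  have hge : ∑ _b : G, (c + 1) ≤
      ∑ b : G, (rowDist star b b + rowDist star (b⁻¹ * a) (b⁻¹ * a)) := by
    refine sum_le_sum fun b _ => ?_
    have h1 := rowDist_mul_le h b (b⁻¹ * a) b (b⁻¹ * a)
    rw [mul_inv_cancel_left] at h1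
    exact (hlt _).trans_le h1
  rw [hsum, sum_const, card_univ, smul_eq_mul, mul_comm] at hge
  omega

/-- A group operation close to the multiplication of `G` is a transport of it along a
permutation that can only move elements whose rows differ almost everywhere. -/
theorem exists_perm_of_opDist_lt (h : IsGroupOp star) {c : ℕ}
    (hc : 2 * opDist (fun a b : G => a * b) star < (c + 1) * Fintype.card G)
    (hcn : 3 * c < Fintype.card G) :
    ∃ f : Equiv.Perm G, (∀ a b, f (a * b) = star (f a) (f b)) ∧
      ∀ a, f a ≠ a → Fintype.card G ≤ c + rowDist star a a := by
  choose f hf using exists_rowDist_le h hc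
  have hinj : Function.Injective f := by
    intro a b hab
    by_contra hne
    have h1 := card_le_rowDist_add_right (star := star) (c := f b) hne
    have h2 := hf a
    have h3 := hf b
    rw [hab] at h2
    omega
  refine ⟨Equiv.ofBijective f (Finite.injective_iff_bijective.mp hinj), fun a b => ?_,
    fun a ha => ?_⟩
  · by_contra hne
    have h1 := card_le_rowDist_add_left h (a := a * b) hne
    have h2 := rowDist_mul_le h a b (f a) (f b)
    have h3 := hf (a * b)
    have h4 := hf a
    have h5 := hf b
    simp only [Equiv.ofBijective_apply] at h1
    omega
  · have h1 := card_le_rowDist_add_left h (a := a) ha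
    have h2 := hf a
    simp only [Equiv.ofBijective_apply] at h1
    omega

end RowDistance

section Defect

variable {G : Type*} [Group G] [Fintype G] [DecidableEq G]

/-- The pairs at which `f` fails to be multiplicative. -/
def defectSet (f : G → G) : Finset (G × G) :=
  {p | f (p.1 * p.2) ≠ f p.1 * f p.2}

theorem opDist_eq_card_defectSet {star : G → G → G} (f : Equiv.Perm G)
    (hf : ∀ a b, f (a * b) = star (f a) (f b)) :
    opDist (fun a b : G => a * b) star = #(defectSet f) := by
  refine (card_bij (fun p _ => (f p.1, f p.2)) (fun p hp => ?_) (fun p _ q _ hpq => ?_)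
    fun q hq => ⟨(f.symm q.1, f.symm q.2), ?_, by simp⟩).symm
  · simpa [defectSet, hf, eq_comm] using hp
  · simpa [Prod.ext_iff] using hpq
  · simpa [defectSet, hf, eq_comm] using hq

/-- The pairs `(x, y)` for which exactly one of `x`, `y`, `x * y` lies in `S`. -/
def meetsOnce (S : Finset G) : Finset (G × G) :=
  {p | (p.1 ∈ S ∧ p.2 ∉ S ∧ p.1 * p.2 ∉ S) ∨ (p.1 ∉ S ∧ p.2 ∈ S ∧ p.1 * p.2 ∉ S) ∨
    (p.1 ∉ S ∧ p.2 ∉ S ∧ p.1 * p.2 ∈ S)}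

/-- The pairs `(x, y)` for which all of `x`, `y`, `x * y` lie in `S`. -/
def meetsThrice (S : Finset G) : Finset (G × G) :=
  {p | p.1 ∈ S ∧ p.2 ∈ S ∧ p.1 * p.2 ∈ S}

theorem card_meetsOnce (S : Finset G) :
    #(meetsOnce S) + 6 * #S ^ 2 = 3 * (#S * Fintype.card G) + 3 * #(meetsThrice S) := by
  have hA : #{p : G × G | p.1 ∈ S} = #S * Fintype.card G := by
    rw [← card_univ, ← card_product]
    congr 1
    ext; simp
  have hB : #{p : G × G | p.2 ∈ S} = #S * Fintype.card G := by
    rw [mul_comm, ← card_univ, ← card_product]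
    congr 1
    ext; simp
  have hC : #{p : G × G | p.1 * p.2 ∈ S} = #S * Fintype.card G := by
    rw [← hA]
    exact card_bij (fun p _ => (p.1 * p.2, p.2)) (by simp)
      (fun p _ q _ hpq => by
        obtain ⟨h1, h2⟩ := Prod.ext_iff.mp hpq
        simp only at h1 h2
        rw [h2] at h1
        exact Prod.ext (mul_right_cancel h1) h2)
      (fun q hq => ⟨(q.1 * q.2⁻¹, q.2), by simpa using hq, by simp⟩)
  have hAB : #{p : G × G | p.1 ∈ S ∧ p.2 ∈ S} = #S ^ 2 := by
    rw [sq, ← card_product]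
    congr 1
    ext; simp
  have hAC : #{p : G × G | p.1 ∈ S ∧ p.1 * p.2 ∈ S} = #S ^ 2 := by
    rw [← hAB]
    exact card_bij (fun p _ => (p.1, p.1 * p.2)) (by simp) (by simp +contextual [Prod.ext_iff])
      (fun q hq => ⟨(q.1, q.1⁻¹ * q.2), by simpa using hq, by simp⟩)
  have hBC : #{p : G × G | p.2 ∈ S ∧ p.1 * p.2 ∈ S} = #S ^ 2 := by
    rw [← hAB]
    exact card_bij (fun p _ => (p.2, p.1 * p.2)) (by simp) (by simp +contextual [Prod.ext_iff])
      (fun q hq => ⟨(q.2 * q.1⁻¹, q.1), by simpa using hq, by simp⟩)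
  have key : #(meetsOnce S) + 2 * (#{p : G × G | p.1 ∈ S ∧ p.2 ∈ S} +
        #{p : G × G | p.1 ∈ S ∧ p.1 * p.2 ∈ S} + #{p : G × G | p.2 ∈ S ∧ p.1 * p.2 ∈ S}) =
      #{p : G × G | p.1 ∈ S} + #{p : G × G | p.2 ∈ S} + #{p : G × G | p.1 * p.2 ∈ S} +
        3 * #(meetsThrice S) := by
    simp only [meetsOnce, meetsThrice, card_filter, mul_sum, ← sum_add_distrib]
    refine sum_congr rfl fun p _ => ?_
    by_cases h1 : p.1 ∈ S <;> by_cases h2 : p.2 ∈ S <;> by_cases h3 : p.1 * p.2 ∈ S <;>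
      simp [h1, h2, h3]
  rw [hA, hB, hC, hAB, hAC, hBC] at key
  linarith

theorem meetsOnce_support_subset_defectSet (f : Equiv.Perm G) :
    meetsOnce f.support ⊆ defectSet f := by
  intro p hp
  simp only [meetsOnce, defectSet, mem_filter, mem_univ, true_and, Equiv.Perm.mem_support,
    not_not] at hp ⊢
  rcases hp with ⟨h1, h2, h3⟩ | ⟨h1, h2, h3⟩ | ⟨h1, h2, h3⟩
  · rw [h2, h3]
    exact fun h => h1 (mul_right_cancel h).symm
  · rw [h1, h3]
    exact fun h => h2 (mul_left_cancel h).symm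
  · rwa [h1, h2]

theorem le_card_defectSet_of_disjoint {f : Equiv.Perm G} {E : Finset (G × G)}
    (hE : E ⊆ defectSet f) (hdisj : Disjoint (meetsOnce f.support) E) :
    #(meetsOnce f.support) + #E ≤ #(defectSet f) := by
  rw [← card_union_of_disjoint hdisj]
  exact card_le_card (union_subset (meetsOnce_support_subset_defectSet f) hE)

/-- In `G`, an involution commutes only with itself and the identity. -/
def InvolutionsSelfCentralizing (G : Type*) [Group G] : Prop :=
  ∀ t u : G, t * t = 1 → t ≠ 1 → u * t = t * u → u = 1 ∨ u = t

theorem card_defectSet_swap_of_sq_eq {u v : G} (huv : u ≠ v) (h : u * u = v) :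
    6 * Fintype.card G - 20 ≤ #(defectSet (Equiv.swap u v)) := by
  have hS : (Equiv.swap u v).support = {u, v} := Equiv.Perm.support_swap huv
  have hcard := card_meetsOnce ({u, v} : Finset G)
  rw [card_pair huv] at hcard
  have huu : (u, u) ∈ meetsThrice ({u, v} : Finset G) := by simp [meetsThrice, h]
  by_cases h' : v * v = u
  · have hvv : (v, v) ∈ meetsThrice ({u, v} : Finset G) := by simp [meetsThrice, h']
    have h2 : 1 < #(meetsThrice ({u, v} : Finset G)) :=
      one_lt_card.mpr ⟨_, huu, _, hvv, by simpa using huv⟩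
    have h3 := card_le_card (meetsOnce_support_subset_defectSet (Equiv.swap u v))
    rw [hS] at h3
    omega
  · have h2 : 0 < #(meetsThrice ({u, v} : Finset G)) := card_pos.mpr ⟨_, huu⟩
    have h3 := le_card_defectSet_of_disjoint (f := Equiv.swap u v) (E := {(u, u)})
      (by simpa [defectSet, h, eq_comm] using h') (by simp [hS, meetsOnce])
    rw [hS, card_singleton] at h3
    omega

theorem card_defectSet_swap (hG : InvolutionsSelfCentralizing G) {u v : G} (huv : u ≠ v) :
    6 * Fintype.card G - 20 ≤ #(defectSet (Equiv.swap u v)) := by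
  have hS : (Equiv.swap u v).support = {u, v} := Equiv.Perm.support_swap huv
  have hcard := card_meetsOnce ({u, v} : Finset G)
  rw [card_pair huv] at hcard
  by_cases h1 : u = 1 ∨ v = 1
  · have huv1 : (u, v) ∈ meetsThrice ({u, v} : Finset G) := by
      rcases h1 with rfl | rfl <;> simp [meetsThrice]
    have hvu1 : (v, u) ∈ meetsThrice ({u, v} : Finset G) := by
      rcases h1 with rfl | rfl <;> simp [meetsThrice]
    have h2 : 1 < #(meetsThrice ({u, v} : Finset G)) :=
      one_lt_card.mpr ⟨_, huv1, _, hvu1, by simp [huv]⟩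
    have h3 := card_le_card (meetsOnce_support_subset_defectSet (Equiv.swap u v))
    rw [hS] at h3
    omega
  push Not at h1
  obtain ⟨hu, hv⟩ := h1
  by_cases hsu : u * u = v
  · exact card_defectSet_swap_of_sq_eq huv hsu
  by_cases hsv : v * v = u
  · rw [Equiv.swap_comm]
    exact card_defectSet_swap_of_sq_eq huv.symm hsv
  suffices ∃ E ⊆ defectSet (Equiv.swap u v), Disjoint (meetsOnce ({u, v} : Finset G)) E ∧
      #E = 4 by
    obtain ⟨E, hE, hdisj, hE4⟩ := this
    have h3 := le_card_defectSet_of_disjoint hE (by rwa [hS])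
    rw [hS] at h3
    omega
  by_cases hw : u⁻¹ * v * (u⁻¹ * v) = 1
  · have hvw : v = u * (u⁻¹ * v) := by simp
    have hw1 : u⁻¹ * v ≠ 1 := by simpa [inv_mul_eq_one] using huv
    have hnc : u * (u⁻¹ * v) ≠ u⁻¹ * v * u := by
      intro hc
      rcases hG _ _ hw hw1 hc with h | h
      · exact hu h
      · rw [← h] at hvw hw
        exact hv (hvw.trans hw)
    have hcomm : u * v ≠ v * u := by
      intro hc
      apply hnc
      rw [mul_assoc, ← hc]
      simp
    have hsq : u * u ≠ v * v := by
      intro hc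
      apply hnc
      have h4 : u⁻¹ * v * (u * (u⁻¹ * v)) = u := by
        rw [← hvw, mul_assoc, ← hc]
        simp
      calc u * (u⁻¹ * v) = u⁻¹ * v * (u⁻¹ * v) * (u * (u⁻¹ * v)) := by rw [hw, one_mul]
        _ = u⁻¹ * v * u := by rw [mul_assoc (u⁻¹ * v), h4]
    refine ⟨{u, v} ×ˢ {u, v}, ?_, ?_, by simp [card_pair huv]⟩
    · intro p hp
      obtain ⟨x, y⟩ := p
      simp only [mem_product, mem_insert, mem_singleton] at hp
      obtain ⟨rfl | rfl, rfl | rfl⟩ := hp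
      all_goals
        simp only [defectSet, mem_filter, mem_univ, true_and, Equiv.swap_apply_left,
          Equiv.swap_apply_right]
        rw [Equiv.swap_apply_of_ne_of_ne]
        all_goals grind
    · rw [disjoint_left]
      simp only [meetsOnce, mem_filter, mem_univ, true_and, mem_product]
      tauto
  · have hw1 : u⁻¹ * v ≠ u := fun h => hsu (by rw [← inv_mul_eq_iff_eq_mul.mp h])
    have hw2 : u⁻¹ * v ≠ v := by simpa using hu
    have hw3 : v⁻¹ * u ≠ v := fun h => hsv (by rw [← inv_mul_eq_iff_eq_mul.mp h])
    have hw4 : v⁻¹ * u ≠ u := by simpa using hv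
    have hw5 : v * u⁻¹ ≠ u := fun h => hsu (mul_inv_eq_iff_eq_mul.mp h).symm
    have hw6 : v * u⁻¹ ≠ v := by simpa using hu
    have hw7 : u * v⁻¹ ≠ v := fun h => hsv (mul_inv_eq_iff_eq_mul.mp h).symm
    have hw8 : u * v⁻¹ ≠ u := by simpa using hv
    have hw9 : v * (u⁻¹ * v) ≠ u := fun h => hw (by rw [mul_assoc, h, inv_mul_cancel])
    have hw10 : u * (v⁻¹ * u) ≠ v := fun h => hw9 (by nth_rewrite 1 [← h]; group)
    refine ⟨{(u, u⁻¹ * v), (v, v⁻¹ * u), (v * u⁻¹, u), (u * v⁻¹, v)}, ?_, ?_, ?_⟩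
    · intro p hp
      simp only [mem_insert, mem_singleton] at hp
      obtain rfl | rfl | rfl | rfl := hp
      · simpa [defectSet, Equiv.swap_apply_of_ne_of_ne hw1 hw2] using hw9.symm
      · simpa [defectSet, Equiv.swap_apply_of_ne_of_ne hw4 hw3] using hw10.symm
      · simpa [defectSet, Equiv.swap_apply_of_ne_of_ne hw5 hw6, mul_assoc] using hw9.symm
      · simpa [defectSet, Equiv.swap_apply_of_ne_of_ne hw8 hw7, mul_assoc] using hw10.symm
    · rw [disjoint_right]
      intro p hp
      simp only [mem_insert, mem_singleton] at hp
      obtain rfl | rfl | rfl | rfl := hp <;> simp [meetsOnce]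
    · rw [card_insert_of_notMem, card_insert_of_notMem, card_pair]
      all_goals simp_all [Prod.ext_iff, eq_comm]

theorem card_defectSet_ge (hG : InvolutionsSelfCentralizing G) (hn : 50 < Fintype.card G)
    {f : Equiv.Perm G} (hf : f ≠ 1) (hf7 : #f.support ≤ 7) :
    6 * Fintype.card G - 20 ≤ #(defectSet f) := by
  have h2 : 2 ≤ #f.support := Equiv.Perm.two_le_card_support_of_ne_one hf
  obtain h2 | h3 := h2.eq_or_lt
  · obtain ⟨u, v, huv, rfl⟩ := Equiv.Perm.card_support_eq_two.mp h2.symm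
    exact card_defectSet_swap hG huv
  · have hcard := card_meetsOnce f.support
    have hle := card_le_card (meetsOnce_support_subset_defectSet f)
    generalize #f.support = k at *
    interval_cases k <;> omega

theorem card_le_opDist {star : G → G → G} (hG : InvolutionsSelfCentralizing G)
    (hn : 50 < Fintype.card G) (h : IsGroupOp star) (hne : star ≠ fun a b => a * b) :
    6 * Fintype.card G - 20 ≤ opDist (fun a b : G => a * b) star := by
  by_contra! hlt
  obtain ⟨f, hf, hmove⟩ := exists_perm_of_opDist_lt h (c := 11) (by omega) (by omega)
  have hf1 : f ≠ 1 := by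
    rintro rfl
    exact hne (funext fun a => funext fun b => (hf a b).symm)
  have hsupp : #f.support * (Fintype.card G - 11) ≤ opDist (fun a b : G => a * b) star := by
    rw [← sum_rowDist_self, ← smul_eq_mul]
    refine (card_nsmul_le_sum _ _ _ fun a ha => ?_).trans
      (sum_le_sum_of_subset (subset_univ f.support))
    have := hmove a (Equiv.Perm.mem_support.mp ha)
    omega
  have h7 : #f.support ≤ 7 := by
    by_contra! h8
    have := Nat.mul_le_mul_right (Fintype.card G - 11) h8
    omega
  have := card_defectSet_ge hG hn hf1 h7
  rw [← opDist_eq_card_defectSet f hf] at this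
  omega

theorem card_defectSet_swap_le {u v : G} (hu : u ≠ 1) (huv : u ≠ v) (huu : u * u ≠ v)
    (hvv : v * v = 1) (hconj : v * u * v = u⁻¹) :
    #(defectSet (Equiv.swap u v)) ≤ 6 * Fintype.card G - 20 := by
  have hS : (Equiv.swap u v).support = {u, v} := Equiv.Perm.support_swap huv
  have hv : v ≠ 1 := by
    rintro rfl
    simp only [one_mul, mul_one] at hconj
    exact huu (by nth_rewrite 2 [hconj]; simp)
  have hempty : meetsThrice ({u, v} : Finset G) = ∅ := by
    rw [meetsThrice, filter_eq_empty_iff]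
    rintro ⟨x, y⟩ -
    simp only [mem_insert, mem_singleton]
    rintro ⟨rfl | rfl, rfl | rfl, h | h⟩ <;> simp_all
  have hcard := card_meetsOnce ({u, v} : Finset G)
  rw [card_pair huv, hempty, card_empty] at hcard
  have hvinv : v⁻¹ = v := inv_eq_of_mul_eq_one_left hvv
  have hvuv : v * (u⁻¹ * v) = u := by
    rw [← hconj, mul_assoc, mul_assoc, hvv, mul_one, ← mul_assoc, hvv, one_mul]
  have huvu : u * (v⁻¹ * u) = v := by
    rw [hvinv]
    nth_rewrite 1 [← hvuv]
    rw [mul_assoc, mul_assoc, ← mul_assoc v v u, hvv, one_mul, inv_mul_cancel, mul_one]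
  have hf1 : Equiv.swap u v 1 = 1 := Equiv.swap_apply_of_ne_of_ne hu.symm hv.symm
  have hsub : defectSet (Equiv.swap u v) ⊆ meetsOnce {u, v} ∪ {u, v} ×ˢ {u, v} := by
    rintro ⟨x, y⟩ hxy
    by_contra hnot
    simp only [mem_union, meetsOnce, mem_filter, mem_univ, true_and, mem_product,
      defectSet] at hxy hnot
    have hfix : ∀ z ∉ ({u, v} : Finset G), Equiv.swap u v z = z := by
      intro z hz
      simp only [mem_insert, mem_singleton, not_or] at hz
      exact Equiv.swap_apply_of_ne_of_ne hz.1 hz.2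
    apply hxy
    by_cases hx : x ∈ ({u, v} : Finset G)
    · have hy : y ∉ ({u, v} : Finset G) := by tauto
      have hz : x * y ∈ ({u, v} : Finset G) := by tauto
      rw [hfix y hy]
      simp only [mem_insert, mem_singleton] at hx hz
      obtain rfl | rfl := hx <;> obtain hz | hz := hz
      · simp_all
      · rw [hz, eq_inv_mul_of_mul_eq hz]
        simp [hvuv]
      · rw [hz, eq_inv_mul_of_mul_eq hz]
        simp [huvu]
      · simp_all
    · by_cases hy : y ∈ ({u, v} : Finset G)
      · have hz : x * y ∈ ({u, v} : Finset G) := by tauto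
        rw [hfix x hx]
        simp only [mem_insert, mem_singleton] at hy hz
        obtain rfl | rfl := hy <;> obtain hz | hz := hz
        · simp_all
        · rw [hz, eq_mul_inv_of_mul_eq hz]
          simp [mul_assoc, hvuv]
        · rw [hz, eq_mul_inv_of_mul_eq hz]
          simp [mul_assoc, huvu]
        · simp_all
      · have hz : x * y ∉ ({u, v} : Finset G) := by tauto
        rw [hfix x hx, hfix y hy, hfix _ hz]
  have hle := (card_le_card hsub).trans (card_union_le _ _)
  rw [card_product, card_pair huv] at hle
  have : 1 < Fintype.card G := Fintype.one_lt_card_iff.mpr ⟨u, v, huv⟩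
  omega

theorem exists_opDist_le {u v : G} (hn : 4 < Fintype.card G) (hu : u ≠ 1) (huv : u ≠ v)
    (huu : u * u ≠ v) (hvv : v * v = 1) (hconj : v * u * v = u⁻¹) :
    ∃ star : G → G → G, IsGroupOp star ∧ star ≠ (fun a b => a * b) ∧
      opDist (fun a b : G => a * b) star ≤ 6 * Fintype.card G - 20 := by
  set f := Equiv.swap u v with hf
  have hdist := opDist_eq_card_defectSet (star := fun a b => f (f.symm a * f.symm b)) f (by simp)
  refine ⟨_, .transport f, fun h => ?_, hdist.trans_le ?_⟩
  · have hcard := card_meetsOnce f.support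
    have hle := card_le_card (meetsOnce_support_subset_defectSet f)
    have hS : #f.support = 2 := Equiv.Perm.card_support_swap huv
    rw [← hdist, h] at hle
    have h0 : opDist (fun a b : G => a * b) (fun a b : G => a * b) = 0 := by simp [opDist]
    rw [h0] at hle
    rw [hS] at hcard
    omega
  · exact card_defectSet_swap_le hu huv huu hvv hconj

end Defect

theorem involutionsSelfCentralizing_dihedralGroup {m : ℕ} (hm : Odd m) :
    InvolutionsSelfCentralizing (DihedralGroup m) := by
  have hcancel : ∀ i : ZMod m, i + i = 0 → i = 0 := by
    intro i hi
    have h2 : IsUnit ((2 : ℕ) : ZMod m) :=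
      (ZMod.isUnit_iff_coprime 2 m).mpr (Nat.coprime_two_left.mpr hm)
    rw [← two_mul] at hi
    exact (h2.mul_right_eq_zero (b := i)).mp (by exact_mod_cast hi)
  rintro (i | i) (j | j) ht ht1 hc
  · rw [DihedralGroup.r_mul_r, DihedralGroup.one_def, DihedralGroup.r.injEq] at ht
    exact absurd (by rw [hcancel i ht, DihedralGroup.one_def]) ht1
  · rw [DihedralGroup.r_mul_r, DihedralGroup.one_def, DihedralGroup.r.injEq] at ht
    exact absurd (by rw [hcancel i ht, DihedralGroup.one_def]) ht1
  · rw [DihedralGroup.r_mul_sr, DihedralGroup.sr_mul_r, DihedralGroup.sr.injEq] at hc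
    left
    rw [hcancel j (by linear_combination -hc), DihedralGroup.one_def]
  · rw [DihedralGroup.sr_mul_sr, DihedralGroup.sr_mul_sr, DihedralGroup.r.injEq] at hc
    right
    rw [sub_eq_zero.mp (hcancel (j - i) (by linear_combination -hc))]

theorem InvolutionsSelfCentralizing.of_mulEquiv {G H : Type*} [Group G] [Group H]
    (hH : InvolutionsSelfCentralizing H) (φ : G ≃* H) : InvolutionsSelfCentralizing G := by
  intro t u ht ht1 hc
  have h := hH (φ t) (φ u) (by rw [← map_mul, ht, map_one]) (by simpa using ht1)
    (by rw [← map_mul, hc, map_mul])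
  simpa using h

/-- for a finite group `(G,∘)` of order `n > 50` which is
dihedral of twice odd order (`G ≃ DihedralGroup m` with `m` odd, `n = 2m`),
`δ(G,∘) = 6n − 20`. -/
theorem delta_of_dihedral_twice_odd_order {G : Type*} [Group G] [Fintype G]
    [DecidableEq G] (n m : ℕ) (hcard : Fintype.card G = n) (hn : 50 < n)
    (hm : Odd m) (hnm : n = 2 * m)
    (hdih : Nonempty (G ≃* DihedralGroup m)) :
    groupDelta G = 6 * n - 20 := by
  obtain ⟨φ⟩ := hdih
  subst hcard
  have hG := (involutionsSelfCentralizing_dihedralGroup hm).of_mulEquiv φ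
  have hlow : ∀ star : G → G → G, IsGroupOp star → star ≠ (fun a b => a * b) →
      6 * Fintype.card G - 20 ≤ opDist (fun a b : G => a * b) star :=
    fun star => card_le_opDist hG hn
  have : Fact (1 < m) := ⟨by omega⟩
  obtain ⟨star, hstar, hne, hle⟩ := exists_opDist_le (u := φ.symm (.r 1)) (v := φ.symm (.sr 0))
    (by omega) (by simp [← DihedralGroup.r_zero]) (by simp)
    (by rw [← map_mul]; simp) (by rw [← map_mul]; simp)
    (by simp only [← map_mul, ← map_inv]; simp)
  have heq := hle.antisymm (hlow star hstar hne)
  refine le_antisymm (Nat.sInf_le ⟨star, hstar, hne, heq.symm⟩) ?_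
  refine le_csInf ⟨_, star, hstar, hne, rfl⟩ ?_
  rintro d ⟨op, hop, hop', rfl⟩
  exact hlow op hop hop'
end

section
/- Let p be a prime with p > 7 and let (G,∘) be a group of order p. Then δ(G,∘) = 6p − 18; that is, the minimum Hamming distance between the group operation ∘ and any other group operation on G equals 6p − 18. -/
section AdditivityDefects

open Finset
open scoped Pointwise

variable {p : ℕ} [Fact p.Prime]

lemma natCast_ne_zero_of_lt {n : ℕ} (hn : n ≠ 0) (hnp : n < p) : (n : ZMod p) ≠ 0 := fun h =>
  hn (Nat.eq_zero_of_dvd_of_lt ((ZMod.natCast_eq_zero_iff _ _).1 h) hnp)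

/-- The pairs at which `f` fails to be additive. -/
def badPairs (f : ZMod p → ZMod p) : Finset (ZMod p × ZMod p) :=
  univ.filter fun q => f (q.1 + q.2) ≠ f q.1 + f q.2

/-- The first coordinates of the pairs `(x, y)` at which `f` fails to be additive. -/
def badRow (f : ZMod p → ZMod p) (y : ZMod p) : Finset (ZMod p) :=
  univ.filter fun x => f (x + y) ≠ f x + f y

/-- The set of points at which `f` takes the value `u`. -/
def fiber (f : ZMod p → ZMod p) (u : ZMod p) : Finset (ZMod p) :=
  univ.filter fun x => f x = u

lemma mem_badRow {f : ZMod p → ZMod p} {x y : ZMod p} :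
    x ∈ badRow f y ↔ f (x + y) ≠ f x + f y := by simp [badRow]

lemma mem_fiber {f : ZMod p → ZMod p} {x u : ZMod p} : x ∈ fiber f u ↔ f x = u := by
  simp [fiber]

lemma card_badPairs (f : ZMod p → ZMod p) : #(badPairs f) = ∑ y, #(badRow f y) := by
  simp only [badPairs, badRow, card_filter]
  rw [← univ_product_univ, sum_product_right]

lemma sum_fiber {M : Type*} [AddCommMonoid M] (f : ZMod p → ZMod p) (g : ZMod p → M) :
    ∑ u, ∑ x ∈ fiber f u, g x = ∑ x, g x :=
  sum_fiberwise _ _ _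

lemma sum_card_fiber (f : ZMod p → ZMod p) : ∑ u, #(fiber f u) = p := by
  have h := sum_fiber f fun _ => 1
  simpa using h

/-- Adding a linear map does not change the additivity defects. -/
lemma badPairs_sub_linear (f : ZMod p → ZMod p) (c : ZMod p) :
    badPairs (fun x => f x - c * x) = badPairs f := by
  ext q
  simp only [badPairs, mem_filter, mem_univ, true_and, ne_eq]
  refine not_congr ⟨fun h => ?_, fun h => ?_⟩ <;> linear_combination h

lemma card_badPairs_scale (f : ZMod p → ZMod p) {a c : ZMod p} (ha : a ≠ 0) (hc : c ≠ 0) :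
    #(badPairs fun x => c * f (a * x)) = #(badPairs f) := by
  refine card_bij' (fun q _ => (a * q.1, a * q.2)) (fun q _ => (a⁻¹ * q.1, a⁻¹ * q.2)) ?_ ?_ ?_ ?_
  · rintro ⟨x, y⟩ h
    simp only [badPairs, mem_filter, mem_univ, true_and, ne_eq, ← mul_add, mul_right_inj' hc]
      at h ⊢
    exact h
  · rintro ⟨x, y⟩ h
    simp only [badPairs, mem_filter, mem_univ, true_and, ne_eq, ← mul_add, mul_right_inj' hc,
      mul_inv_cancel_left₀ ha] at h ⊢
    exact h
  · rintro ⟨x, y⟩ _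
    simp [inv_mul_cancel_left₀ ha]
  · rintro ⟨x, y⟩ _
    simp [mul_inv_cancel_left₀ ha]

/-- A nonempty set closed under a nonzero translation is everything. -/
lemma mem_of_forall_add_mem {S : Set (ZMod p)} {w : ZMod p} (hw : w ≠ 0)
    (h : ∀ x ∈ S, x + w ∈ S) {x : ZMod p} (hx : x ∈ S) (y : ZMod p) : y ∈ S := by
  have key : ∀ k : ℕ, x + k * w ∈ S := by
    intro k
    induction k with
    | zero => simpa using hx
    | succ k ih => have := h _ ih; push_cast; convert this using 1; ring
  have := key ((y - x) / w).val
  rwa [ZMod.natCast_zmod_val, div_mul_cancel₀ _ hw, add_sub_cancel] at this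

/-- If `e y ≠ 0` and `e` omits a value, the row of `y` contains at least as many defects as any
fiber of `e` has elements. -/
lemma card_fiber_le_card_badRow {e : ZMod p → ZMod p} (he : ∃ v, fiber e v = ∅) {y : ZMod p}
    (hy : e y ≠ 0) (u : ZMod p) : #(fiber e u) ≤ #(badRow e y) := by
  set w := e y with hw
  obtain ⟨v, hv⟩ := he
  have step : ∀ t, #(fiber e t) ≤ #(fiber e (t + w)) + #(badRow e y ∩ fiber e t) := by
    intro t
    have hsub : fiber e t \ badRow e y ⊆ (fiber e (t + w)).image (fun x => x - y) := by
      intro x hx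
      simp only [mem_sdiff, mem_fiber, mem_badRow, not_not] at hx
      refine mem_image.2 ⟨x + y, ?_, by ring⟩
      rw [mem_fiber, hx.2, hx.1]
    have h1 := (card_le_card hsub).trans card_image_le
    have h2 := card_sdiff_add_card_inter (fiber e t) (badRow e y)
    rw [inter_comm] at h2
    omega
  have tele : ∀ j : ℕ, #(fiber e u) ≤ #(fiber e (u + j * w)) +
      ∑ i ∈ range j, #(badRow e y ∩ fiber e (u + i * w)) := by
    intro j
    induction j with
    | zero => simp
    | succ j ih =>
      have h := step (u + j * w)
      rw [sum_range_succ]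
      have : u + ((j + 1 : ℕ) : ZMod p) * w = u + j * w + w := by push_cast; ring
      rw [this]
      omega
  have hj := tele ((v - u) / w).val
  rw [ZMod.natCast_zmod_val, div_mul_cancel₀ _ hy, add_sub_cancel, hv, card_empty, zero_add] at hj
  refine hj.trans ?_
  rw [← card_biUnion]
  · exact card_le_card (biUnion_subset.2 fun i _ => inter_subset_left)
  · intro i hi j hj hij
    refine disjoint_left.2 fun x hxi hxj => hij ?_
    simp only [mem_inter, mem_fiber] at hxi hxj
    have h : (i : ZMod p) = j := by
      have := hxi.2.symm.trans hxj.2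
      exact mul_right_cancel₀ hy (add_left_cancel this)
    have hlt : ∀ k ∈ (range ((v - u) / w).val : Finset ℕ), k < p := fun k hk =>
      (mem_range.1 hk).trans (ZMod.val_lt _)
    have := congrArg ZMod.val h
    rwa [ZMod.val_natCast_of_lt (hlt i hi), ZMod.val_natCast_of_lt (hlt j hj)] at this

/-- If `x ↦ x + e x` is injective, the values of `e` cannot be exactly `0` and one other value. -/
lemma exists_third_value {e : ZMod p → ZMod p} (he : Function.Injective fun x => x + e x)
    {x₀ x₁ : ZMod p} (h₀ : e x₀ = 0) (h₁ : e x₁ ≠ 0) : ∃ x, e x ≠ 0 ∧ e x ≠ e x₁ := by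
  by_contra! h
  have := mem_of_forall_add_mem (S := {x | e x = e x₁}) h₁ (fun x hx => ?_) rfl x₀
  · exact h₁ (this.symm.trans h₀)
  · refine h _ fun h0 => h₁ ?_
    have := @he (x + e x₁) x (by simp only [Set.mem_ofPred_eq] at hx; simp [h0, hx])
    simpa using this

/-- The number of elements of `A` that translation by `y` moves into `C`. -/
def overlap (A C : Finset (ZMod p)) (y : ZMod p) : ℕ :=
  #(A.filter fun x => x + y ∈ C)

lemma overlap_le_left (A C : Finset (ZMod p)) (y : ZMod p) : overlap A C y ≤ #A :=
  card_filter_le _ _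

lemma overlap_neg (A C : Finset (ZMod p)) (y : ZMod p) : overlap A C (-y) = overlap C A y := by
  refine card_bij' (fun x _ => x - y) (fun x _ => x + y) ?_ ?_ ?_ ?_ <;>
    simp +contextual [sub_eq_add_neg, add_assoc]

lemma add_mem_of_overlap_eq {A C : Finset (ZMod p)} {y : ZMod p} (h : overlap A C y = #A)
    {x : ZMod p} (hx : x ∈ A) : x + y ∈ C :=
  (card_filter_eq_iff.1 h) x hx

/-- An upper bound for the sum of `b` overlaps of a set of size `a` with one of size `c`. -/
def overlapCap (b a c : ℕ) : ℕ :=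
  Nat.sub (Nat.mul (min a c) b) (b - (a - c + (c - a) + 1))

lemma sum_overlap_le_of_card_le {A C : Finset (ZMod p)} (hA : A.Nonempty) (hC : #C < p)
    (hAC : #A ≤ #C) (Y : Finset (ZMod p)) :
    ∑ y ∈ Y, overlap A C y ≤ overlapCap (#Y) (#A) (#C) := by
  set F := Y.filter fun y => overlap A C y = #A with hF
  have hFcard : #F ≤ #C - #A + 1 := by
    rcases F.eq_empty_or_nonempty with h | h
    · simp [h]
    · have h1 := ZMod.cauchy_davenport (Fact.out : p.Prime) hA h
      have h2 : A + F ⊆ C := by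
        intro z hz
        obtain ⟨x, hx, y, hy, rfl⟩ := mem_add.1 hz
        exact add_mem_of_overlap_eq (mem_filter.1 hy).2 hx
      have h3 := card_le_card h2
      omega
  have h : ∑ y ∈ Y, overlap A C y + #(Y.filter fun y => ¬ overlap A C y = #A) ≤ #A * #Y := by
    rw [card_filter, ← sum_add_distrib, mul_comm]
    refine (sum_le_card_nsmul Y _ (#A) fun y _ => ?_).trans_eq (smul_eq_mul _ _)
    have := overlap_le_left A C y
    split_ifs <;> omega
  have h' := card_filter_add_card_filter_not (s := Y) fun y => overlap A C y = #A
  rw [← hF] at h'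
  have : overlapCap (#Y) (#A) (#C) = #A * #Y - (#Y - (#A - #C + (#C - #A) + 1)) := by
    simp [overlapCap, hAC]
  rw [this]
  omega

lemma overlapCap_comm (b a c : ℕ) : overlapCap b a c = overlapCap b c a := by
  simp only [overlapCap, min_comm a c, add_comm (a - c)]

lemma sum_overlap_le {A C : Finset (ZMod p)} (hA : #A < p) (hC : #C < p) (Y : Finset (ZMod p)) :
    ∑ y ∈ Y, overlap A C y ≤ overlapCap (#Y) (#A) (#C) := by
  have hneg : ∑ y ∈ Y, overlap A C y = ∑ y ∈ -Y, overlap C A y := by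
    simp [← overlap_neg A C]
  rcases A.eq_empty_or_nonempty with rfl | hA'
  · simp [overlap]
  rcases C.eq_empty_or_nonempty with rfl | hC'
  · simp [overlap]
  rcases le_total (#A) (#C) with h | h
  · exact sum_overlap_le_of_card_le hA' hC h Y
  · rw [hneg, overlapCap_comm]
    simpa using sum_overlap_le_of_card_le hC' hA h (-Y)

lemma sum_overlap_le_mul (A C Y : Finset (ZMod p)) : ∑ y ∈ Y, overlap A C y ≤ #A * #Y := by
  rw [mul_comm]
  exact sum_le_card_nsmul Y _ (#A) fun y _ => overlap_le_left A C y

lemma overlap_self_zero (E : Finset (ZMod p)) : overlap E E 0 = #E := by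
  simp [overlap]

lemma overlap_self_lt {E : Finset (ZMod p)} (hE : E.Nonempty) (hE' : #E < p) {y : ZMod p}
    (hy : y ≠ 0) : overlap E E y < #E := by
  refine lt_of_le_of_ne (overlap_le_left E E y) fun h => ?_
  obtain ⟨x, hx⟩ := hE
  have : E = univ := eq_univ_iff_forall.2 fun z =>
    mem_of_forall_add_mem (S := (E : Set (ZMod p))) hy (fun x hx => add_mem_of_overlap_eq h hx) hx z
  simp [this] at hE'

lemma card_inter_vadd_self (E : Finset (ZMod p)) (y : ZMod p) :
    #(E ∩ (y +ᵥ E)) = overlap E E y := by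
  rw [← overlap_neg, overlap]
  congr 1
  ext x
  simp [← neg_vadd_mem_iff, add_comm]

lemma card_union_vadd_add (E : Finset (ZMod p)) (y : ZMod p) :
    #(E ∪ (y +ᵥ E)) + overlap E E y = 2 * #E := by
  rw [← card_inter_vadd_self, card_union_add_card_inter, card_vadd_finset]
  ring

/-- A set that is nearly invariant under two translations is nearly invariant under their
generated square, against Cauchy–Davenport. -/
lemma eq_or_eq_neg_of_card_le_overlap {E : Finset (ZMod p)} (h2 : 2 ≤ #E) (h3 : #E + 3 ≤ p)
    {y z : ZMod p} (hy : y ≠ 0) (hz : z ≠ 0) (hyE : #E ≤ overlap E E y + 1)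
    (hzE : #E ≤ overlap E E z + 1) : z = y ∨ z = -y := by
  by_contra! hne
  have hE : E.Nonempty := card_pos.1 (by omega)
  set I := E ∩ (y +ᵥ E) with hI
  set P := E ∪ (z +ᵥ E) with hP
  have hIcard : #I = overlap E E y := card_inter_vadd_self E y
  have hIlt := overlap_self_lt hE (by omega) hy
  have hPcard := card_union_vadd_add E z
  have hPcard2 := card_union_vadd_add P y
  have hII := card_union_vadd_add I z
  have hIlt2 := overlap_self_lt (E := I) (card_pos.1 (by omega)) (by omega) hz
  have hsub : I ∪ (z +ᵥ I) ⊆ P ∩ (y +ᵥ P) := by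
    simp only [hI, hP, vadd_finset_union, vadd_finset_inter]
    rw [vadd_comm z y]
    intro x
    simp only [mem_union, mem_inter]
    tauto
  have h4 := card_le_card hsub
  rw [card_inter_vadd_self] at h4
  have hcd := ZMod.cauchy_davenport (Fact.out : p.Prime) hE
    (t := {0, y, z, y + z}) ⟨0, by simp⟩
  have hfour : #({0, y, z, y + z} : Finset (ZMod p)) = 4 := by
    have : y + z ≠ 0 := fun h => hne.2 (eq_neg_of_add_eq_zero_right h)
    have h1 := hne.1.symm
    rw [card_insert_of_notMem, card_insert_of_notMem, card_pair] <;>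
      simp [hy, hz, hy.symm, hz.symm, this.symm, h1]
  have hsum : E + {0, y, z, y + z} ⊆ P ∪ (y +ᵥ P) := by
    intro x hx
    obtain ⟨u, hu, v, hv, rfl⟩ := mem_add.1 hx
    simp only [hP, mem_union, ← neg_vadd_mem_iff, vadd_eq_add]
    simp only [mem_insert, mem_singleton] at hv
    rcases hv with rfl | rfl | rfl | rfl
    · simp [hu]
    · simp [add_comm, hu]
    · simp [add_comm, hu]
    · right; right; convert hu using 1; ring
  have h5 := card_le_card hsum
  rw [hfour] at hcd
  rw [← hP] at hPcard
  omega

/-- A lower bound for the total defect of a set of size `s` under `k` translations. -/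
def selfLoss (k s : ℕ) : ℕ :=
  bif Nat.ble s 1 then (bif Nat.beq s 0 then 0 else k - 1) else max (k - 1) (2 * k - 4)

lemma selfLoss_le {k s n : ℕ} (h1 : s ≠ 0 → k - 1 ≤ n) (h2 : 2 ≤ s → 2 * k - 4 ≤ n) :
    selfLoss k s ≤ n := by
  unfold selfLoss
  rcases s with _ | _ | s
  · exact Nat.zero_le _
  · exact h1 (by simp)
  · exact max_le (h1 (by simp)) (h2 (by simp))

lemma sum_overlap_self_add_card_le {E : Finset (ZMod p)} (hE : E.Nonempty) (hE' : #E < p)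
    (Y : Finset (ZMod p)) : ∑ y ∈ Y, overlap E E y + (#Y - 1) ≤ #E * #Y := by
  have h : ∑ y ∈ Y, (overlap E E y + 1) ≤ ∑ y ∈ Y, (#E + if y = 0 then 1 else 0) := by
    refine sum_le_sum fun y _ => ?_
    split_ifs with h
    · simp [h, overlap_self_zero]
    · exact overlap_self_lt hE hE' h
  simp only [sum_add_distrib, sum_const, smul_eq_mul, sum_ite_eq', mul_one] at h
  have h0 := sum_overlap_le_mul E E Y
  rw [mul_comm] at h0 ⊢
  split_ifs at h <;> omega

lemma sum_overlap_self_add_two_mul_le {E : Finset (ZMod p)} (h2 : 2 ≤ #E) (h3 : #E + 3 ≤ p)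
    (Y : Finset (ZMod p)) : ∑ y ∈ Y, overlap E E y + (2 * #Y - 4) ≤ #E * #Y := by
  obtain ⟨y₀, hy₀⟩ : ∃ y₀, ∀ y, y ≠ 0 → #E ≤ overlap E E y + 1 → y = y₀ ∨ y = -y₀ := by
    by_cases h : ∃ y₀ : ZMod p, y₀ ≠ 0 ∧ #E ≤ overlap E E y₀ + 1
    · obtain ⟨y₀, h0, h1⟩ := h
      exact ⟨y₀, fun y hy hy' => eq_or_eq_neg_of_card_le_overlap h2 h3 h0 hy h1 hy'⟩
    · push Not at h
      exact ⟨0, fun y hy hy' => absurd hy' (not_le.2 (h y hy))⟩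
  have hE : E.Nonempty := card_pos.1 (by omega)
  have h : ∑ y ∈ Y, (overlap E E y + 2) ≤ ∑ y ∈ Y, (#E + (if y = 0 then 2 else 0) +
      (if y = y₀ then 1 else 0) + (if y = -y₀ then 1 else 0)) := by
    refine sum_le_sum fun y _ => ?_
    by_cases hy : y = 0
    · subst hy
      simp [overlap_self_zero, add_assoc]
    · have h1 := overlap_self_lt hE (by omega) hy
      by_cases h4 : #E ≤ overlap E E y + 1
      · rcases hy₀ y hy h4 with h | h <;> rw [if_pos h] <;> omega
      · omega
  simp only [sum_add_distrib, sum_const, smul_eq_mul, sum_ite_eq'] at h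
  have h0 := sum_overlap_le_mul E E Y
  rw [mul_comm (#Y) (#E)] at h
  split_ifs at h <;> omega

lemma sum_overlap_self_add_selfLoss_le {E : Finset (ZMod p)} (hE : #E < p)
    (hE' : 2 ≤ #E → #E + 3 ≤ p) (Y : Finset (ZMod p)) :
    ∑ y ∈ Y, overlap E E y + selfLoss (#Y) (#E) ≤ #E * #Y := by
  have h0 := sum_overlap_le_mul E E Y
  have : selfLoss (#Y) (#E) ≤ #E * #Y - ∑ y ∈ Y, overlap E E y := by
    refine selfLoss_le (fun h => ?_) fun h => ?_
    · have := sum_overlap_self_add_card_le (card_ne_zero.1 h) hE Y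
      omega
    · have := sum_overlap_self_add_two_mul_le h (hE' h) Y
      omega
  omega

lemma card_badRow_add_sum_overlap (e : ZMod p → ZMod p) (y : ZMod p) :
    #(badRow e y) + ∑ u, overlap (fiber e u) (fiber e (u + e y)) y = p := by
  have h1 : ∑ u, overlap (fiber e u) (fiber e (u + e y)) y =
      ∑ u, ∑ x ∈ fiber e u, if e (x + y) = e x + e y then 1 else 0 := by
    refine sum_congr rfl fun u _ => ?_
    rw [overlap, card_filter]
    refine sum_congr rfl fun x hx => ?_
    rw [mem_fiber] at hx
    simp [mem_fiber, hx]
  rw [h1, sum_fiber, ← card_filter, badRow, add_comm]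
  simpa using card_filter_add_card_filter_not (s := univ) fun x => e (x + y) = e x + e y

/-- The rows of a given value of `e` are bad wherever the fibers of `e` do not overlap. -/
lemma card_mul_le_sum_card_badRow (e : ZMod p → ZMod p) (he : ∀ u, #(fiber e u) < p) (w : ZMod p) :
    #(fiber e w) * p ≤ ∑ y ∈ fiber e w, #(badRow e y) +
      ∑ u, overlapCap (#(fiber e w)) (#(fiber e u)) (#(fiber e (u + w))) := by
  have h : ∑ y ∈ fiber e w, (#(badRow e y) + ∑ u, overlap (fiber e u) (fiber e (u + w)) y) =
      #(fiber e w) * p := by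
    rw [← smul_eq_mul, ← sum_const]
    refine sum_congr rfl fun y hy => ?_
    rw [← mem_fiber.1 hy]
    exact card_badRow_add_sum_overlap e y
  rw [← h, sum_add_distrib, sum_comm]
  gcongr with u
  exact sum_overlap_le (he _) (he _) _

lemma sum_le_sum_card_badRow (e : ZMod p → ZMod p) {L : ZMod p → ℕ}
    (hL : ∀ u, ∑ y ∈ fiber e 0, overlap (fiber e u) (fiber e u) y + L u ≤
      #(fiber e u) * #(fiber e 0)) :
    ∑ u, L u ≤ ∑ y ∈ fiber e 0, #(badRow e y) := by
  have h : ∑ y ∈ fiber e 0, (#(badRow e y) + ∑ u, overlap (fiber e u) (fiber e u) y) =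
      ∑ u, #(fiber e u) * #(fiber e 0) := by
    rw [← sum_mul, sum_card_fiber, mul_comm, ← smul_eq_mul, ← sum_const]
    refine sum_congr rfl fun y hy => ?_
    have := card_badRow_add_sum_overlap e y
    simpa [mem_fiber.1 hy] using this
  have h2 := sum_le_sum fun u (_ : u ∈ univ) => hL u
  rw [← h, sum_add_distrib, sum_add_distrib, sum_comm (t := univ)] at h2
  omega

lemma card_support_add_card_fiber_zero (e : ZMod p → ZMod p) :
    #(univ.filter fun x => e x ≠ 0) + #(fiber e 0) = p := by
  rw [add_comm, fiber]
  simpa using card_filter_add_card_filter_not (s := univ) fun x => e x = 0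

lemma card_fiber_add_card_fiber_le (e : ZMod p → ZMod p) {u v : ZMod p} (h : u ≠ v) :
    #(fiber e u) + #(fiber e v) ≤ p := by
  rw [← sum_pair (f := fun w => #(fiber e w)) h]
  exact (sum_le_sum_of_subset (subset_univ _)).trans_eq (sum_card_fiber e)

lemma card_fiber_lt_of_ne (e : ZMod p → ZMod p) {x u : ZMod p} (hu : u ≠ e x) :
    #(fiber e u) < p := by
  have h := card_fiber_add_card_fiber_le e hu
  have : 0 < #(fiber e (e x)) := card_pos.2 ⟨x, mem_fiber.2 rfl⟩
  omega

/-- An inclusion–exclusion bound, sharp when `e` is nonzero at exactly two points. -/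
lemma three_mul_le_card_badPairs_add {e : ZMod p → ZMod p} {m : ℕ}
    (hm : #(univ.filter fun x => e x ≠ 0) = m + 1) (hn : ∀ v ≠ 0, #(fiber e v) ≤ m) :
    3 * ((m + 1) * p) ≤ #(badPairs e) + 3 * ((m + 1) * m) + 3 * ((m + 1) * (m + 1)) := by
  set i : ZMod p → ℕ := fun x => if e x ≠ 0 then 1 else 0 with hi
  set g : (ZMod p → ZMod p) → ZMod p → ZMod p → ℕ :=
    fun s x y => if e x ≠ 0 ∧ e y = s (e x) then 1 else 0 with hg
  have hi_sum : ∑ x, i x = m + 1 := by rw [← hm, card_filter]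
  have hg_sum : ∀ s : ZMod p → ZMod p, (∀ u ≠ 0, s u ≠ 0) →
      ∑ x, ∑ y, g s x y ≤ (m + 1) * m := by
    intro s hs
    rw [← hm, ← smul_eq_mul, ← sum_const, sum_filter]
    refine sum_le_sum fun x _ => ?_
    by_cases hx : e x = 0
    · simp [hg, hx]
    · simp only [hg, ne_eq, hx, not_false_eq_true, true_and, if_true]
      rw [← card_filter]
      exact hn _ (hs _ hx)
  have hleft : ∀ F : ZMod p → ZMod p → ℕ, ∑ x, ∑ y, F x (x + y) = ∑ x, ∑ y, F x y := fun F =>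
    sum_congr rfl fun x _ => Equiv.sum_comp (Equiv.addLeft x) (F x)
  have hright : ∀ F : ZMod p → ZMod p → ℕ, ∑ x, ∑ y, F y (x + y) = ∑ x, ∑ y, F x y := fun F => by
    rw [sum_comm]
    exact sum_congr rfl fun y _ => Equiv.sum_comp (Equiv.addRight y) (F y)
  have key : ∀ x y, i x + i y + i (x + y) ≤ (if e (x + y) ≠ e x + e y then 1 else 0) +
      g id x (x + y) + g id y (x + y) + g Neg.neg x y +
      i x * i y + i x * i (x + y) + i y * i (x + y) := by
    intro x y
    simp only [hi, hg, id]
    by_cases hx : e x = 0 <;> by_cases hy : e y = 0 <;> by_cases hz : e (x + y) = 0 <;>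
      simp [hx, hy, hz, eq_comm]
    · split_ifs <;> simp_all
    · split_ifs <;> simp_all
    · by_cases h : e y = - e x
      · simp [h]
      · have : e x + e y ≠ 0 := fun h' => h (eq_neg_of_add_eq_zero_right h')
        simp [this]
  have hsum := sum_le_sum fun x (_ : x ∈ univ) => sum_le_sum fun y (_ : y ∈ univ) => key x y
  have hbad : ∑ x, ∑ y, (if e (x + y) ≠ e x + e y then 1 else 0) = #(badPairs e) := by
    rw [card_badPairs, sum_comm]
    simp only [badRow, card_filter]
  simp only [sum_add_distrib] at hsum
  rw [hbad, hleft fun x z => g id x z, hright fun y z => g id y z,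
    hleft fun x z => i x * i z, hright fun y z => i y * i z, hleft fun x z => i z] at hsum
  simp only [← mul_sum, ← sum_mul, hi_sum, sum_const, card_univ, ZMod.card, smul_eq_mul] at hsum
  have h1 := hg_sum id fun _ => id
  have h2 := hg_sum Neg.neg fun _ => neg_ne_zero.2
  nlinarith

lemma sum_card_fiber_ne_zero_add (e : ZMod p → ZMod p) {x y : ZMod p} (hx : e x ≠ 0)
    (hy : e y ≠ 0) (hxy : e y ≠ e x) {u : ZMod p} (hu : u ≠ 0) :
    #(fiber e u) + #(fiber e 0) + 1 ≤ p := by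
  obtain ⟨z, hz, hzu⟩ : ∃ z, e z ≠ 0 ∧ e z ≠ u := by
    by_cases h : e x = u
    · exact ⟨y, hy, h ▸ hxy⟩
    · exact ⟨x, hx, h⟩
  have h : ∑ w ∈ {u, 0, e z}, #(fiber e w) ≤ p :=
    (sum_le_sum_of_subset (subset_univ _)).trans_eq (sum_card_fiber e)
  rw [sum_insert (by simp [hu, hzu.symm]), sum_pair hz.symm] at h
  have : 0 < #(fiber e (e z)) := card_pos.2 ⟨z, mem_fiber.2 rfl⟩
  omega

lemma le_card_badPairs_of_le_card_fiber_zero {e : ZMod p → ZMod p} (hp : 11 ≤ p) {x y : ZMod p}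
    (hx : e x ≠ 0) (hy : e y ≠ 0) (hxy : e y ≠ e x) (hk : p ≤ #(fiber e 0) + 4) :
    6 * p - 18 ≤ #(badPairs e) := by
  have hm := card_support_add_card_fiber_zero e
  obtain ⟨m, hm'⟩ : ∃ m, #(univ.filter fun x => e x ≠ 0) = m + 1 :=
    Nat.exists_eq_succ_of_ne_zero (card_ne_zero.2 ⟨x, by simpa using hx⟩)
  have h := three_mul_le_card_badPairs_add hm' fun v hv => by
    have := sum_card_fiber_ne_zero_add e hx hy hxy hv
    omega
  have h1 := sum_card_fiber_ne_zero_add e hx hy hxy hx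
  have h2 : 0 < #(fiber e (e x)) := card_pos.2 ⟨x, mem_fiber.2 rfl⟩
  have hm3 : m ≤ 3 := by omega
  have hm1 : 1 ≤ m := by omega
  interval_cases m <;> omega

lemma mul_le_sum_card_badRow {e : ZMod p → ZMod p} {x y : ZMod p}
    (hx : e x ≠ 0) (hy : e y ≠ 0) (hxy : e y ≠ e x) {z : ZMod p} (hz : e z = 0) :
    3 * (#(fiber e 0) - 1) ≤ ∑ y ∈ fiber e 0, #(badRow e y) := by
  have h := sum_le_sum_card_badRow e
    (L := fun u => if #(fiber e u) ≠ 0 then #(fiber e 0) - 1 else 0) fun u => by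
      split_ifs with hu
      · refine sum_overlap_self_add_card_le (card_ne_zero.1 hu) ?_ _
        by_cases h : u = 0
        · exact card_fiber_lt_of_ne e (h ▸ hx.symm)
        · exact card_fiber_lt_of_ne e (x := z) (hz ▸ h)
      · exact sum_overlap_le_mul _ _ _
  refine le_trans ?_ h
  have h3 : #({0, e x, e y} : Finset (ZMod p)) = 3 :=
    card_eq_three.2 ⟨0, e x, e y, hx.symm, hy.symm, hxy.symm, rfl⟩
  rw [← h3, ← smul_eq_mul, ← sum_const, ← sum_filter]
  refine sum_le_sum_of_subset fun w hw => ?_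
  simp only [mem_insert, mem_singleton] at hw
  simp only [mem_filter, mem_univ, true_and]
  refine card_ne_zero.2 ?_
  rcases hw with rfl | rfl | rfl
  exacts [⟨z, mem_fiber.2 hz⟩, ⟨x, mem_fiber.2 rfl⟩, ⟨y, mem_fiber.2 rfl⟩]

lemma card_badPairs_eq (e : ZMod p → ZMod p) : #(badPairs e) =
    ∑ y ∈ fiber e 0, #(badRow e y) + ∑ y with e y ≠ 0, #(badRow e y) := by
  rw [card_badPairs]
  exact (sum_filter_add_sum_filter_not univ (fun y => e y = 0) _).symm

lemma le_card_badPairs_of_seven_le {e : ZMod p → ZMod p} (hp : 11 ≤ p) {x y : ZMod p}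
    (hx : e x ≠ 0) (hy : e y ≠ 0) (hxy : e y ≠ e x) {z : ZMod p} (hz : e z = 0)
    (hV : ∃ v, fiber e v = ∅) (hk : #(fiber e 0) + 5 ≤ p) {u : ZMod p}
    (hu : 7 ≤ #(fiber e u)) (hmax : ∀ w, #(fiber e w) ≤ #(fiber e u)) :
    6 * p - 18 ≤ #(badPairs e) := by
  have h1 := mul_le_sum_card_badRow hx hy hxy hz
  have h2 : #(univ.filter fun x => e x ≠ 0) * #(fiber e u) ≤ ∑ y with e y ≠ 0, #(badRow e y) := by
    rw [← smul_eq_mul, ← sum_const]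
    exact sum_le_sum fun y hy => card_fiber_le_card_badRow hV (mem_filter.1 hy).2 u
  have h3 := card_badPairs_eq e
  have h4 := card_support_add_card_fiber_zero e
  have h5 := hmax 0
  have h6 : 0 < #(fiber e 0) := card_pos.2 ⟨z, mem_fiber.2 hz⟩
  have hp12 : p ≠ 12 := by
    rintro rfl
    exact absurd (Fact.out : Nat.Prime 12) (by norm_num)
  set m := #(univ.filter fun x => e x ≠ 0) with hm
  set k := #(fiber e 0) with hk'
  set n := #(fiber e u) with hn
  suffices 6 * p ≤ 3 * (k - 1) + m * n + 18 by omega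
  by_cases hu0 : u = 0
  · have hkn : n = k := by rw [hn, hu0]
    rw [hkn] at hu ⊢
    obtain ⟨i, hi⟩ := Nat.exists_eq_add_of_le hu
    obtain ⟨j, hj⟩ := Nat.exists_eq_add_of_le (show 5 ≤ m by omega)
    have : 1 ≤ i + j := by omega
    have h7 : k - 1 = 6 + i := by omega
    rw [h7, ← h4, hi, hj]
    nlinarith
  · have h7 := card_fiber_add_card_fiber_le e hu0
    obtain ⟨t, ht⟩ := Nat.exists_eq_add_of_le (show n ≤ m by omega)
    obtain ⟨i, hi⟩ := Nat.exists_eq_add_of_le hu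
    obtain ⟨j, hj⟩ := Nat.exists_eq_add_of_le h6
    have h8 : k - 1 = j := by omega
    rw [h8, ← h4, ht, hi, hj]
    have : j ≤ 6 + i := by omega
    nlinarith

/-- The function on `ℕ` that takes the values `s₀, …, s₄` at `0, 1, a, b, c` and vanishes
elsewhere. -/
def sizeAt (a b c s₁ s₂ s₃ s₄ s₀ x : ℕ) : ℕ :=
  bif Nat.beq x 0 then s₀ else bif Nat.beq x 1 then s₁ else bif Nat.beq x a then s₂ else
  bif Nat.beq x b then s₃ else bif Nat.beq x c then s₄ else 0

/-- A bound for the overlaps of the fiber of `u` with the fiber of `u + w`. -/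
def fiberCap (s : ℕ → ℕ) (p w u : ℕ) : ℕ :=
  (fun n => bif Nat.beq n 0 then 0 else overlapCap (s w) (s u) n) (s (Nat.mod (Nat.add u w) p))

/-- A bound for the number of good pairs `(x, y)` with `e y = w`. -/
def rowCap (s : ℕ → ℕ) (p a b c w : ℕ) : ℕ :=
  Nat.add (overlapCap (s w) (s 0) (s w)) (Nat.add (fiberCap s p w 1) (Nat.add (fiberCap s p w a)
    (Nat.add (fiberCap s p w b) (fiberCap s p w c))))

/-- A bound for the number of good pairs `(x, y)` with `e y ≠ 0`. -/
def totalCap (s : ℕ → ℕ) (p a b c : ℕ) : ℕ :=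
  Nat.add (rowCap s p a b c 1) (Nat.add (rowCap s p a b c a) (Nat.add (rowCap s p a b c b)
    (rowCap s p a b c c)))

/-- A lower bound for the number of bad pairs `(x, y)` with `e y = 0`. -/
def totalLoss (s₀ s₁ s₂ s₃ s₄ : ℕ) : ℕ :=
  selfLoss s₀ s₀ + selfLoss s₀ s₁ + selfLoss s₀ s₂ + selfLoss s₀ s₃ + selfLoss s₀ s₄

/-- Whether the bounds hold for all values `1 < a < b < c` of the given multiplicities whose
weighted sum vanishes modulo `p`. -/
def checkValues (p s₀ s₁ s₂ s₃ s₄ t d : ℕ) : Bool :=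
  (List.range (p - 4)).all fun a => (List.range (p - 3 - a)).all fun b =>
  (List.range (p - 4 - a - b)).all fun c => (fun a b c =>
    bif Nat.beq (Nat.mod (Nat.add (Nat.add s₁ (Nat.mul s₂ a))
      (Nat.add (Nat.mul s₃ b) (Nat.mul s₄ c))) p) 0 then
      Nat.ble (Nat.add (totalCap (sizeAt a b c s₁ s₂ s₃ s₄ s₀) p a b c) t) d
    else true) (a + 2) (a + b + 3) (a + b + c + 4)

/-- Whether the overlap bounds yield at least `6 * p - 18` bad pairs, for all possible fiber sizes
up to `n` and all possible values. -/
def checkSizes (p n : ℕ) : Bool :=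
  (List.range (n + 1)).all fun s₀ => (List.range (n + 1)).all fun s₁ =>
  (List.range (s₁ + 1)).all fun s₂ => (List.range (s₁ + 1)).all fun s₃ =>
  (List.range (s₁ + 1)).all fun s₄ =>
    bif Nat.beq (s₀ + s₁ + s₂ + s₃ + s₄) p then
      bif Nat.beq s₀ 0 then true else
      bif Nat.ble (6 * p - 18) ((p - s₀) * max s₀ s₁ + totalLoss s₀ s₁ s₂ s₃ s₄) then true else
      checkValues p s₀ s₁ s₂ s₃ s₄ (6 * p - 18) (p * p - s₀ * p + totalLoss s₀ s₁ s₂ s₃ s₄)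
    else true

lemma checkSizes_spec {p n s₀ s₁ s₂ s₃ s₄ a b c : ℕ} (h : checkSizes p n = true)
    (hs₀ : s₀ ≤ n) (hs₁ : s₁ ≤ n) (hs₂ : s₂ ≤ s₁) (hs₃ : s₃ ≤ s₁) (hs₄ : s₄ ≤ s₁)
    (hsum : s₀ + s₁ + s₂ + s₃ + s₄ = p) (h0 : s₀ ≠ 0)
    (ha : 2 ≤ a) (hb : a < b) (hc : b < c) (hcp : c < p)
    (hmod : (s₁ + s₂ * a + (s₃ * b + s₄ * c)) % p = 0) :
    6 * p - 18 ≤ (p - s₀) * max s₀ s₁ + totalLoss s₀ s₁ s₂ s₃ s₄ ∨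
      totalCap (sizeAt a b c s₁ s₂ s₃ s₄ s₀) p a b c + (6 * p - 18) ≤
        p * p - s₀ * p + totalLoss s₀ s₁ s₂ s₃ s₄ := by
  have beq_eq_true : ∀ {m n : ℕ}, m = n → Nat.beq m n = true := fun h => by rwa [Nat.beq_eq]
  simp only [checkSizes, List.all_eq_true, List.mem_range] at h
  have h := h s₀ (by omega) s₁ (by omega) s₂ (by omega) s₃ (by omega) s₄ (by omega)
  rw [beq_eq_true hsum, cond_true] at h
  have hb0 : Nat.beq s₀ 0 = false := by
    rw [← Bool.not_eq_true, Nat.beq_eq]; exact h0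
  rw [hb0, cond_false] at h
  by_cases h1 : 6 * p - 18 ≤ (p - s₀) * max s₀ s₁ + totalLoss s₀ s₁ s₂ s₃ s₄
  · exact Or.inl h1
  have hb1 : Nat.ble (6 * p - 18) ((p - s₀) * max s₀ s₁ + totalLoss s₀ s₁ s₂ s₃ s₄) = false := by
    rw [← Bool.not_eq_true, Nat.ble_eq]; exact h1
  rw [hb1, cond_false] at h
  simp only [checkValues, List.all_eq_true, List.mem_range] at h
  have h := h (a - 2) (by omega) (b - a - 1) (by omega) (c - b - 1) (by omega)
  rw [show a - 2 + 2 = a by omega, show a - 2 + (b - a - 1) + 3 = b by omega,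
    show a - 2 + (b - a - 1) + (c - b - 1) + 4 = c by omega] at h
  change (bif Nat.beq ((s₁ + s₂ * a + (s₃ * b + s₄ * c)) % p) 0 then _ else _) = true at h
  rw [beq_eq_true hmod, cond_true] at h
  exact Or.inr (Nat.le_of_ble_eq_true h)

lemma sum_eq_of_support {M : Type*} [AddCommMonoid M] {a b c : ℕ} (ha : 2 ≤ a) (hb : a < b)
    (hc : b < c) (hcp : c < p) (g : ZMod p → M)
    (hg : ∀ u : ZMod p, u.val ∉ ({0, 1, a, b, c} : Finset ℕ) → g u = 0) :
    ∑ u, g u = g 0 + (g 1 + (g a + (g b + g c))) := by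
  have h1 : ∑ u, g u = ∑ x ∈ range p, g x := by
    refine sum_bij' (fun u _ => u.val) (fun x _ => (x : ZMod p)) ?_ ?_ ?_ ?_ ?_
    · intro u _; simpa using ZMod.val_lt u
    · simp
    · simp
    · intro x hx; exact ZMod.val_natCast_of_lt (mem_range.1 hx)
    · simp
  have h2 : ({0, 1, a, b, c} : Finset ℕ) ⊆ range p := by
    intro x hx
    simp only [mem_insert, mem_singleton] at hx
    rw [mem_range]
    omega
  rw [h1, ← sum_subset h2]
  · have e1 : (0 : ℕ) ∉ ({1, a, b, c} : Finset ℕ) := by simp; omega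
    have e2 : 1 ∉ ({a, b, c} : Finset ℕ) := by simp; omega
    have e3 : a ∉ ({b, c} : Finset ℕ) := by simp; omega
    rw [sum_insert e1, sum_insert e2, sum_insert e3, sum_pair hc.ne]
    simp
  · intro x hx hx'
    refine hg _ ?_
    rwa [ZMod.val_natCast_of_lt (mem_range.1 hx)]

lemma overlapCap_zero_left (b c : ℕ) : overlapCap b 0 c = 0 := by simp [overlapCap]

lemma overlapCap_zero_right (b a : ℕ) : overlapCap b a 0 = 0 := by simp [overlapCap]

lemma fiberCap_eq (s : ℕ → ℕ) (p w u : ℕ) :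
    fiberCap s p w u = overlapCap (s w) (s u) (s ((u + w) % p)) := by
  unfold fiberCap
  change (bif Nat.beq (s ((u + w) % p)) 0 then 0 else _) = _
  rcases h : s ((u + w) % p) with _ | n
  · rw [overlapCap_zero_right]; rfl
  · rfl

lemma sizeAt_eq {a b c : ℕ} (s : ℕ → ℕ) {x : ℕ} (hs : x ∉ ({0, 1, a, b, c} : Finset ℕ) → s x = 0) :
    sizeAt a b c (s 1) (s a) (s b) (s c) (s 0) x = s x := by
  have hbeq : ∀ m n : ℕ, Nat.beq m n = decide (m = n) := fun m n => by
    rw [Bool.eq_iff_iff, Nat.beq_eq, decide_eq_true_iff]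
  simp only [sizeAt, hbeq, Bool.cond_decide]
  split_ifs with h0 h1 h2 h3 h4
  · rw [h0]
  · rw [h1]
  · rw [h2]
  · rw [h3]
  · rw [h4]
  · exact (hs (by simp [*])).symm

lemma le_card_badPairs_of_check {e : ZMod p → ZMod p} (he : Function.Injective fun x => x + e x)
    (hp : 11 ≤ p) (hcheck : checkSizes p 6 = true) (hV : ∃ v, fiber e v = ∅)
    (hmax : ∀ u, #(fiber e u) ≤ 6) (hone : ∀ u ≠ 0, #(fiber e u) ≤ #(fiber e 1))
    (h0 : #(fiber e 0) ≠ 0) {a b c : ℕ} (ha : 2 ≤ a) (hb : a < b) (hc : b < c) (hcp : c < p)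
    (hsupp : ∀ x, (e x).val ∈ ({0, 1, a, b, c} : Finset ℕ)) :
    6 * p - 18 ≤ #(badPairs e) := by
  set n : ZMod p → ℕ := fun u => #(fiber e u) with hn
  have hfib : ∀ u : ZMod p, u.val ∉ ({0, 1, a, b, c} : Finset ℕ) → fiber e u = ∅ := by
    intro u hu
    refine eq_empty_of_forall_notMem fun x hx => hu ?_
    rw [← mem_fiber.1 hx]
    exact hsupp x
  have hn0 : ∀ u : ZMod p, u.val ∉ ({0, 1, a, b, c} : Finset ℕ) → n u = 0 := fun u hu =>
    card_eq_zero.2 (hfib u hu)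
  have hsum : n 0 + n 1 + n a + n b + n c = p := by
    have h := sum_card_fiber e
    rw [sum_eq_of_support ha hb hc hcp _ hn0] at h
    simp only [hn] at h ⊢
    omega
  have hmod : (n 1 + n a * a + (n b * b + n c * c)) % p = 0 := by
    have h1 : ∑ x, e x = 0 := by
      have h2 := (Function.Injective.bijective_of_finite he).sum_comp fun x => x
      rw [sum_add_distrib] at h2
      simpa using h2
    rw [← sum_fiber e] at h1
    have h3 : ∀ u, ∑ x ∈ fiber e u, e x = n u * u := fun u => by
      rw [sum_congr rfl fun x hx => mem_fiber.1 hx, sum_const, nsmul_eq_mul]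
    simp only [h3] at h1
    rw [sum_eq_of_support ha hb hc hcp _ fun u hu => by rw [hn0 u hu]; simp] at h1
    refine Nat.mod_eq_zero_of_dvd ((ZMod.natCast_eq_zero_iff _ _).1 ?_)
    push_cast
    linear_combination h1
  have hB := card_badPairs e
  rw [← sum_fiber e, sum_eq_of_support ha hb hc hcp _ fun u hu => by rw [hfib u hu]; simp] at hB
  have hloss : totalLoss (n 0) (n 1) (n a) (n b) (n c) ≤ ∑ y ∈ fiber e 0, #(badRow e y) := by
    have h := sum_le_sum_card_badRow e (L := fun u => selfLoss (n 0) (n u)) fun u =>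
      sum_overlap_self_add_selfLoss_le ((hmax u).trans_lt (by omega))
        (fun _ => (Nat.add_le_add_right (hmax u) 3).trans (by omega)) _
    rw [sum_eq_of_support ha hb hc hcp _ fun u hu => by rw [hn0 u hu]; rfl] at h
    unfold totalLoss
    omega
  have hrow : ∀ w ≠ 0, n w * max (n 0) (n 1) ≤ ∑ y ∈ fiber e w, #(badRow e y) := by
    intro w hw
    simp only [hn]
    rw [← smul_eq_mul, ← sum_const]
    refine sum_le_sum fun y hy => ?_
    have hy' : e y ≠ 0 := by rwa [mem_fiber.1 hy]
    exact max_le (card_fiber_le_card_badRow hV hy' _) (card_fiber_le_card_badRow hV hy' _)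
  set s := sizeAt a b c (n 1) (n a) (n b) (n c) (n 0) with hs
  have hsn : ∀ x < p, s x = n x := by
    intro x hx
    have := sizeAt_eq (a := a) (b := b) (c := c) (fun x : ℕ => n x) (x := x) fun h => by
      refine hn0 _ ?_
      rwa [ZMod.val_natCast_of_lt hx]
    simpa using this
  have hcap : ∀ w < p, n w * p ≤ ∑ y ∈ fiber e w, #(badRow e y) + rowCap s p a b c w := by
    intro w hw
    have h := card_mul_le_sum_card_badRow e (fun u => (hmax u).trans_lt (by omega)) w
    rw [sum_eq_of_support ha hb hc hcp _ fun u hu => by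
      rw [hfib u hu]; exact overlapCap_zero_left _ _] at h
    have hfc : ∀ u < p, fiberCap s p w u = overlapCap (n w) (n u) (n (u + w)) := by
      intro u hu
      rw [fiberCap_eq, hsn w hw, hsn u hu, hsn _ (Nat.mod_lt _ (by omega))]
      simp
    have : rowCap s p a b c w = overlapCap (n w) (n 0) (n (0 + w)) +
        (overlapCap (n w) (n 1) (n (1 + w)) + (overlapCap (n w) (n a) (n (a + w)) +
        (overlapCap (n w) (n b) (n (b + w)) + overlapCap (n w) (n c) (n (c + w))))) := by
      rw [← hfc a (by omega), ← hfc b (by omega), ← hfc c (by omega)]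
      have h1 := hfc 1 (by omega)
      rw [Nat.cast_one] at h1
      have h2 := hsn 0 (by omega)
      rw [Nat.cast_zero] at h2
      rw [← h1, zero_add, ← hsn w hw, ← h2]
      rfl
    rw [this]
    exact h
  have hprod : (p - n 0) * max (n 0) (n 1) = n 1 * max (n 0) (n 1) + n a * max (n 0) (n 1) +
      n b * max (n 0) (n 1) + n c * max (n 0) (n 1) := by
    rw [show p - n 0 = n 1 + n a + n b + n c by omega]
    ring
  have hprod' : p * p - n 0 * p = n 1 * p + n a * p + n b * p + n c * p := by
    rw [← Nat.sub_mul, show p - n 0 = n 1 + n a + n b + n c by omega]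
    ring
  have hna := natCast_ne_zero_of_lt (by omega : a ≠ 0) (by omega : a < p)
  have hnb := natCast_ne_zero_of_lt (by omega : b ≠ 0) (by omega : b < p)
  have hnc := natCast_ne_zero_of_lt (by omega : c ≠ 0) (by omega : c < p)
  rcases checkSizes_spec (s₀ := n 0) (s₁ := n 1) (s₂ := n a) (s₃ := n b) (s₄ := n c) hcheck
    (hmax 0) (hmax 1) (hone _ hna) (hone _ hnb) (hone _ hnc) hsum h0
    ha hb hc hcp hmod with h | h
  · have h1 := hrow 1 one_ne_zero
    have h2 := hrow _ hna
    have h3 := hrow _ hnb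
    have h4 := hrow _ hnc
    omega
  · have h1 := hcap 1 (by omega)
    have h2 := hcap a (by omega)
    have h3 := hcap b (by omega)
    have h4 := hcap c (by omega)
    rw [Nat.cast_one] at h1
    rw [← hs] at h
    have h5 : totalCap s p a b c = rowCap s p a b c 1 + (rowCap s p a b c a +
      (rowCap s p a b c b + rowCap s p a b c c)) := rfl
    omega

lemma checkSizes_eq_true {p : ℕ} (hp : p.Prime) (h11 : 11 ≤ p) (h30 : p ≤ 30) :
    checkSizes p 6 = true := by
  interval_cases p <;> first | (exfalso; revert hp; norm_num; done) | decide +kernel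

lemma exists_subset_insert_insert {S : Finset ℕ} {p : ℕ} (hp : 5 ≤ p) (hS : S ⊆ range p)
    (hS5 : #S ≤ 5) (h0 : 0 ∈ S) (h1 : 1 ∈ S) :
    ∃ a b c, 2 ≤ a ∧ a < b ∧ b < c ∧ c < p ∧ S ⊆ {0, 1, a, b, c} := by
  obtain ⟨T, hST, hTp, hT⟩ := exists_subsuperset_card_eq hS hS5 (by simpa using hp)
  have hT3 : #(T \ {0, 1}) = 3 := by
    rw [card_sdiff_of_subset, hT, card_pair zero_ne_one]
    intro x hx
    simp only [mem_insert, mem_singleton] at hx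
    rcases hx with rfl | rfl
    exacts [hST h0, hST h1]
  set o := (T \ {0, 1}).orderEmbOfFin hT3 with ho
  have hmem : ∀ i, o i ∈ T \ {0, 1} := orderEmbOfFin_mem _ hT3
  refine ⟨o 0, o 1, o 2, ?_, ?_, ?_, ?_, ?_⟩
  · have := hmem 0
    simp only [mem_sdiff, mem_insert, mem_singleton] at this
    omega
  · exact o.lt_iff_lt.2 (by decide)
  · exact o.lt_iff_lt.2 (by decide)
  · exact mem_range.1 (hTp (mem_sdiff.1 (hmem 2)).1)
  · intro x hx
    by_cases hx01 : x ∈ ({0, 1} : Finset ℕ)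
    · simp only [mem_insert, mem_singleton] at hx01 ⊢
      tauto
    · have : x ∈ Set.range o := by
        rw [ho, range_orderEmbOfFin]
        exact mem_coe.2 (mem_sdiff.2 ⟨hST hx, hx01⟩)
      obtain ⟨i, rfl⟩ := this
      fin_cases i <;> simp


lemma fiber_scale (e : ZMod p → ZMod p) {v : ZMod p} (hv : v ≠ 0) (u : ZMod p) :
    #(fiber (fun x => v⁻¹ * e (v * x)) u) = #(fiber e (v * u)) := by
  refine card_bij' (fun x _ => v * x) (fun x _ => v⁻¹ * x) ?_ ?_ ?_ ?_
  · intro x hx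
    simp only [mem_fiber] at hx ⊢
    rw [← hx, mul_inv_cancel_left₀ hv]
  · intro x hx
    simp only [mem_fiber] at hx ⊢
    rw [mul_inv_cancel_left₀ hv, hx, inv_mul_cancel_left₀ hv]
  · intro x _; exact inv_mul_cancel_left₀ hv x
  · intro x _; exact mul_inv_cancel_left₀ hv x

lemma le_card_badPairs_of_card_fiber_le_six {e : ZMod p → ZMod p}
    (he : Function.Injective fun x => x + e x) (hp : 11 ≤ p) (hV : #(univ.image e) ≤ 5)
    {x : ZMod p} (hx : e x ≠ 0) {z : ZMod p} (hz : e z = 0) (hmax : ∀ u, #(fiber e u) ≤ 6) :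
    6 * p - 18 ≤ #(badPairs e) := by
  have hp30 : p ≤ 30 := by
    have h := card_eq_sum_card_image e univ
    have h2 := sum_le_card_nsmul (univ.image e) (fun u => #(fiber e u)) 6 fun u _ => hmax u
    rw [card_univ, ZMod.card] at h
    simp only [fiber, smul_eq_mul] at h2
    omega
  obtain ⟨v, hv, hvmax⟩ := exists_max_image (univ.erase 0) (fun u => #(fiber e u))
    ⟨e x, mem_erase.2 ⟨hx, mem_univ _⟩⟩
  have hv0 := ne_of_mem_erase hv
  have hvpos : 0 < #(fiber e v) := (card_pos.2 ⟨x, mem_fiber.2 rfl⟩).trans_le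
    (hvmax (e x) (mem_erase.2 ⟨hx, mem_univ _⟩))
  set e' : ZMod p → ZMod p := fun x => v⁻¹ * e (v * x) with he'
  have hcard : ∀ u, #(fiber e' u) = #(fiber e (v * u)) := fiber_scale e hv0
  rw [← card_badPairs_scale e hv0 (inv_ne_zero hv0)]
  have himage : univ.image e' = (univ.image e).image (v⁻¹ * ·) := by
    ext w
    simp only [mem_image, mem_univ, true_and, he', exists_exists_eq_and]
    exact ⟨fun ⟨t, ht⟩ => ⟨v * t, ht⟩, fun ⟨t, ht⟩ => ⟨v⁻¹ * t, by
      rwa [mul_inv_cancel_left₀ hv0]⟩⟩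
  have hV' : #(univ.image e') ≤ 5 := himage ▸ card_image_le.trans hV
  have hmem : ∀ u, #(fiber e' u) ≠ 0 → u.val ∈ (univ.image e').image ZMod.val := by
    intro u hu
    obtain ⟨t, ht⟩ := card_ne_zero.1 hu
    exact mem_image_of_mem _ (mem_image.2 ⟨t, mem_univ _, mem_fiber.1 ht⟩)
  have h0 : #(fiber e' 0) ≠ 0 := by
    rw [hcard, mul_zero]
    exact card_ne_zero.2 ⟨z, mem_fiber.2 hz⟩
  have h1 : #(fiber e' 1) ≠ 0 := by
    rw [hcard, mul_one]
    exact hvpos.ne'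
  have : Fact (1 < p) := ⟨by omega⟩
  obtain ⟨a, b, c, ha, hb, hc, hcp, hsub⟩ := exists_subset_insert_insert (p := p)
    (S := (univ.image e').image ZMod.val) (by omega)
    (image_subset_iff.2 fun u _ => mem_range.2 (ZMod.val_lt u)) (card_image_le.trans hV')
    (by simpa using hmem 0 h0) (by simpa [ZMod.val_one] using hmem 1 h1)
  refine le_card_badPairs_of_check (fun s t hst => ?_) hp
    (checkSizes_eq_true (Fact.out : p.Prime) hp hp30) ?_ (fun u => hcard u ▸ hmax _)
    (fun u hu => ?_) h0 ha hb hc hcp fun t => hsub ?_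
  · have h := @he (v * s) (v * t) (by
      simp only at hst ⊢
      have := congrArg (v * ·) hst
      simpa [mul_add, mul_inv_cancel_left₀ hv0] using this)
    exact mul_left_cancel₀ hv0 h
  · by_contra! h
    have : univ.image e' = univ := eq_univ_iff_forall.2 fun u => by
      obtain ⟨t, ht⟩ := h u
      exact mem_image.2 ⟨t, mem_univ _, mem_fiber.1 ht⟩
    rw [this, card_univ, ZMod.card] at hV'
    omega
  · rw [hcard, hcard, mul_one]
    exact hvmax _ (mem_erase.2 ⟨mul_ne_zero hv0 hu, mem_univ _⟩)
  · exact mem_image_of_mem _ (mem_image_of_mem _ (mem_univ t))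

theorem le_card_badPairs_of_card_image_le {e : ZMod p → ZMod p}
    (he : Function.Injective fun x => x + e x) (hp : 11 ≤ p) (hV : #(univ.image e) ≤ 5)
    {x z : ZMod p} (hx : e x ≠ 0) (hz : e z = 0) : 6 * p - 18 ≤ #(badPairs e) := by
  obtain ⟨y, hy, hxy⟩ := exists_third_value he hz hx
  by_cases hk : p ≤ #(fiber e 0) + 4
  · exact le_card_badPairs_of_le_card_fiber_zero hp hx hy hxy hk
  obtain ⟨u, -, hu⟩ := exists_max_image univ (fun u => #(fiber e u)) univ_nonempty
  by_cases h7 : 7 ≤ #(fiber e u)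
  · refine le_card_badPairs_of_seven_le hp hx hy hxy hz ?_ (by omega) h7
      fun w => hu w (mem_univ w)
    by_contra! h
    have : univ.image e = univ := eq_univ_iff_forall.2 fun w => by
      obtain ⟨t, ht⟩ := h w
      exact mem_image.2 ⟨t, mem_univ _, mem_fiber.1 ht⟩
    rw [this, card_univ, ZMod.card] at hV
    omega
  · exact le_card_badPairs_of_card_fiber_le_six he hp hV hx hz fun w =>
      (hu w (mem_univ w)).trans (by omega)

/-- A bijection that is not additive has at least `6 * p - 18` additivity defects. -/
theorem le_card_badPairs {f : ZMod p → ZMod p} (hf : Function.Injective f) (hp : 11 ≤ p)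
    (hbad : (badPairs f).Nonempty) : 6 * p - 18 ≤ #(badPairs f) := by
  by_contra! hlt
  obtain ⟨a, ha, hrow⟩ : ∃ a ≠ 0, #(badRow f a) ≤ 5 := by
    by_contra! h
    have h1 : ∑ _y ∈ univ.erase (0 : ZMod p), 6 ≤ ∑ y ∈ univ.erase (0 : ZMod p), #(badRow f y) :=
      sum_le_sum fun y hy => h y (ne_of_mem_erase hy)
    rw [sum_const, card_erase_of_mem (mem_univ _), card_univ, ZMod.card, smul_eq_mul] at h1
    have h2 := card_badPairs f
    rw [← add_sum_erase _ _ (mem_univ 0)] at h2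
    omega
  have hfa : f a ≠ 0 := by
    intro h0
    have : badRow f a = univ := eq_univ_iff_forall.2 fun x => mem_badRow.2 fun h => by
      rw [h0, add_zero] at h
      exact ha (by simpa using hf h)
    rw [this, card_univ, ZMod.card] at hrow
    omega
  set g : ZMod p → ZMod p := fun x => (f a)⁻¹ * f (a * x) with hg
  set e : ZMod p → ZMod p := fun x => g x - 1 * x with he
  have hbad_eq : #(badPairs e) = #(badPairs f) := by
    rw [he, badPairs_sub_linear, hg, card_badPairs_scale f ha (inv_ne_zero hfa)]
  have he1 : e 1 = 0 := by simp [he, hg, hfa]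
  have hrow1 : #(badRow e 1) ≤ 5 := by
    refine (card_le_card_of_injOn (a * ·) (fun x hx => ?_)
      (mul_right_injective₀ ha).injOn).trans hrow
    rw [mem_coe, mem_badRow] at hx ⊢
    refine fun h => hx ?_
    rw [he1]
    simp only [he, hg, mul_add, mul_one, h]
    field_simp
    ring
  obtain ⟨x, hx⟩ : ∃ x, e x ≠ 0 := by
    by_contra! h
    have := card_pos.2 hbad
    rw [← hbad_eq] at this
    simp [badPairs, h] at this
  have hV : #(univ.image e) ≤ 5 := by
    refine (card_le_card fun u hu => ?_).trans
      ((card_image_le (s := badRow e 1) (f := e)).trans hrow1)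
    obtain ⟨t, -, rfl⟩ := mem_image.1 hu
    by_contra hnot
    have hall := mem_of_forall_add_mem (S := {s | e s = e t}) one_ne_zero (fun s hs => by
      by_contra h
      refine hnot (mem_image.2 ⟨s, mem_badRow.2 fun h' => h ?_, hs⟩)
      rw [he1, add_zero] at h'
      exact h'.trans hs) rfl
    exact hx ((hall x).trans ((hall 1).symm.trans he1))
  have := le_card_badPairs_of_card_image_le (e := e) (fun s t hst => ?_) hp hV hx he1
  · omega
  · simp only [he, hg, one_mul, add_sub_cancel] at hst
    exact mul_left_cancel₀ ha (hf (mul_left_cancel₀ (inv_ne_zero hfa) hst))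

/-- Interchanging `1` and `-1` gives a permutation that is close to being additive. -/
lemma card_badPairs_swap_le (hp : 11 ≤ p) :
    #(badPairs (Equiv.swap (1 : ZMod p) (-1))) ≤ 6 * p - 18 := by
  have h2 : (2 : ZMod p) ≠ 0 := by
    exact_mod_cast natCast_ne_zero_of_lt two_ne_zero (by omega : 2 < p)
  have h3 : (3 : ZMod p) ≠ 0 := by
    exact_mod_cast natCast_ne_zero_of_lt three_ne_zero (by omega : 3 < p)
  have hne : (1 : ZMod p) ≠ -1 := fun h => h2 (by linear_combination h)
  have h21 : (2 : ZMod p) ≠ 1 := fun h => one_ne_zero (α := ZMod p) (by linear_combination h)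
  have h2n1 : (2 : ZMod p) ≠ -1 := fun h => h3 (by linear_combination h)
  have swap_zero : Equiv.swap (1 : ZMod p) (-1) 0 = 0 :=
    Equiv.swap_apply_of_ne_of_ne zero_ne_one (by simp)
  set T : Finset (ZMod p) := {1, -1, 0} with hT
  set A := ({1, -1} : Finset (ZMod p)) ×ˢ Tᶜ with hA
  set A' := Tᶜ ×ˢ ({1, -1} : Finset (ZMod p)) with hA'
  set B : Finset (ZMod p × ZMod p) := {(1, 1), (-1, -1)} with hB
  set C : ZMod p → Finset (ZMod p × ZMod p) := fun z =>
    (insert (2 * z) T)ᶜ.image fun x => (x, z - x) with hC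
  have hTcard : #T = 3 := card_eq_three.2 ⟨1, -1, 0, hne, one_ne_zero, by simp, rfl⟩
  have hcover : badPairs (Equiv.swap (1 : ZMod p) (-1)) ⊆ A ∪ A' ∪ B ∪ (C 1 ∪ C (-1)) := by
    rintro ⟨x, y⟩ h
    simp only [badPairs, mem_filter, mem_univ, true_and] at h
    have hC' : ∀ z, x + y = z → z ≠ 0 → x ≠ 1 → x ≠ -1 → x ≠ 0 → y ≠ -z → (x, y) ∈ C z := by
      intro z hz hz0 hx1 hx2 hx3 hy
      refine mem_image.2 ⟨x, ?_, by rw [← hz]; simp⟩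
      have : x ≠ 2 * z := fun h => hy (by linear_combination hz - h)
      simp [hT, this, hx1, hx2, hx3]
    simp only [hA, hA', hB, hT, mem_union, mem_product, mem_insert, mem_singleton, mem_compl,
      Prod.mk.injEq, not_or]
    by_cases hx1 : x = 1
    · by_cases hy0 : y = 0
      · simp [hx1, hy0, swap_zero] at h
      · by_cases hy1 : y = -1
        · simp [hx1, hy1, swap_zero] at h
        · by_cases hy : y = 1 <;> simp [hx1, hy0, hy1, hy]
    by_cases hx2 : x = -1
    · by_cases hy0 : y = 0
      · simp [hx2, hy0, swap_zero] at h
      · by_cases hy1 : y = 1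
        · simp [hx2, hy1, swap_zero] at h
        · by_cases hy : y = -1 <;> simp [hx2, hy0, hy1, hy]
    by_cases hx0 : x = 0
    · simp [hx0, swap_zero] at h
    by_cases hy1 : y = 1
    · simp [hx1, hx2, hx0, hy1]
    by_cases hy2 : y = -1
    · simp [hx1, hx2, hx0, hy2]
    right
    rw [Equiv.swap_apply_of_ne_of_ne hx1 hx2, Equiv.swap_apply_of_ne_of_ne hy1 hy2] at h
    by_cases hz1 : x + y = 1
    · exact Or.inl (hC' 1 hz1 one_ne_zero hx1 hx2 hx0 hy2)
    by_cases hz2 : x + y = -1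
    · exact Or.inr (hC' (-1) hz2 (by simp) hx1 hx2 hx0 (by simpa using hy1))
    exact absurd (Equiv.swap_apply_of_ne_of_ne hz1 hz2) h
  have hTc : #Tᶜ = p - 3 := by rw [card_compl, hTcard, ZMod.card]
  have hCcard : ∀ z : ZMod p, 2 * z ∉ T → #(C z) ≤ p - 4 := fun z hz => by
    refine card_image_le.trans_eq ?_
    rw [card_compl, card_insert_of_notMem hz, hTcard, ZMod.card]
  have hC1 := hCcard 1 (by simp [hT, h2, h21, h2n1])
  have hC2 := hCcard (-1) (by simp [hT, h2, h21, neg_eq_iff_eq_neg, h2n1])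
  have hB2 : #B ≤ 2 := card_le_two
  have hpair : #({1, -1} : Finset (ZMod p)) = 2 := card_pair hne
  have hAc : #A = 2 * (p - 3) := by rw [hA, card_product, hpair, hTc]
  have hAc' : #A' = (p - 3) * 2 := by rw [hA', card_product, hpair, hTc]
  have := card_le_card hcover
  have e1 := card_union_le (A ∪ A' ∪ B) (C 1 ∪ C (-1))
  have e2 := card_union_le (A ∪ A') B
  have e3 := card_union_le A A'
  have e4 := card_union_le (C 1) (C (-1))
  omega

lemma IsGroupOp.exists_equiv_zmod {G : Type*} [Fintype G] {star : G → G → G} (h : IsGroupOp star)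
    (hcard : Fintype.card G = p) : ∃ φ : G ≃ ZMod p, ∀ a b, φ (star a b) = φ a + φ b := by
  obtain ⟨e, inv, hassoc, h1, h2, h3, h4⟩ := h
  let _ : Group G :=
    { mul := star, one := e, inv := inv, mul_assoc := hassoc, one_mul := h1, mul_one := h2,
      inv_mul_cancel := h3 }
  let φ : G ≃* Multiplicative (ZMod p) := mulEquivOfPrimeCardEq (p := p)
    (by rw [Nat.card_eq_fintype_card, hcard])
    (by rw [Nat.card_congr Multiplicative.toAdd, Nat.card_zmod])
  exact ⟨φ.toEquiv.trans Multiplicative.toAdd, fun a b => congrArg Multiplicative.toAdd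
    (φ.map_mul a b)⟩

lemma isGroupOp_of_equiv {G H : Type*} [AddGroup H] (φ : G ≃ H) :
    IsGroupOp fun a b => φ.symm (φ a + φ b) :=
  ⟨φ.symm 0, fun a => φ.symm (-φ a), by simp [add_assoc], by simp, by simp, by simp, by simp⟩

lemma opDist_eq_card_badPairs {G : Type*} [Fintype G] [DecidableEq G] {s t : G → G → G}
    {ψ φ : G ≃ ZMod p} (hψ : ∀ a b, ψ (s a b) = ψ a + ψ b) (hφ : ∀ a b, φ (t a b) = φ a + φ b) :
    opDist s t = #(badPairs fun x => φ (ψ.symm x)) := by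
  refine card_equiv (ψ.prodCongr ψ) fun q => ?_
  simp [badPairs, ← hψ, ← hφ]

end AdditivityDefects

/-- for a prime `p > 7` and a group `(G,∘)` of order `p`,
`δ(G,∘) = 6p − 18`. -/
theorem delta_of_group_of_prime_order {G : Type*} [Group G] [Fintype G]
    [DecidableEq G] (p : ℕ) (hp : p.Prime) (hp7 : 7 < p)
    (hcard : Fintype.card G = p) :
    groupDelta G = 6 * p - 18 := by
  have : Fact p.Prime := ⟨hp⟩
  have hp11 : 11 ≤ p := by
    by_contra! h
    interval_cases p <;> revert hp <;> norm_num
  have hmul : IsGroupOp fun a b : G => a * b :=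
    ⟨1, fun a => a⁻¹, mul_assoc, one_mul, mul_one, inv_mul_cancel, mul_inv_cancel⟩
  obtain ⟨ψ, hψ⟩ := hmul.exists_equiv_zmod hcard
  have hlower : ∀ star : G → G → G, IsGroupOp star → star ≠ (fun a b => a * b) →
      6 * p - 18 ≤ opDist (fun a b : G => a * b) star := by
    intro star hstar hne
    obtain ⟨φ, hφ⟩ := hstar.exists_equiv_zmod hcard
    rw [opDist_eq_card_badPairs hψ hφ]
    refine le_card_badPairs (φ.injective.comp ψ.symm.injective) hp11 (Finset.card_pos.1 ?_)
    rw [← opDist_eq_card_badPairs hψ hφ]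
    refine Finset.card_pos.2 ?_
    by_contra hempty
    refine hne (funext₂ fun a b => ?_)
    by_contra hab
    exact hempty ⟨(a, b), by simpa [eq_comm] using hab⟩
  set φ := ψ.trans (Equiv.swap 1 (-1)) with hφ
  set star : G → G → G := fun a b => φ.symm (φ a + φ b) with hstar
  have hne : star ≠ fun a b => a * b := by
    intro h
    have h1 := congrArg φ (congrFun₂ h (ψ.symm 1) (ψ.symm 1))
    have h3 := natCast_ne_zero_of_lt three_ne_zero (by omega : 3 < p)
    have h4 := natCast_ne_zero_of_lt four_ne_zero (by omega : 4 < p)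
    push_cast at h3 h4
    simp only [hstar, hφ, Equiv.apply_symm_apply, Equiv.trans_apply, hψ,
      Equiv.swap_apply_left] at h1
    rw [Equiv.swap_apply_of_ne_of_ne (fun h => one_ne_zero (α := ZMod p) (by linear_combination h))
      (fun h => h3 (by linear_combination h))] at h1
    exact h4 (by linear_combination -h1)
  have hupper : opDist (fun a b : G => a * b) star ≤ 6 * p - 18 := by
    rw [opDist_eq_card_badPairs hψ (φ := φ) (by simp [hstar])]
    simpa [hφ] using card_badPairs_swap_le hp11
  have hgroup : IsGroupOp star := isGroupOp_of_equiv φ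
  refine IsLeast.csInf_eq ⟨⟨star, hgroup, hne, ?_⟩, ?_⟩
  · exact (hlower star hgroup hne).antisymm hupper
  · rintro d ⟨s, hs, hs', rfl⟩
    exact hlower s hs hs'
end

section
/- For every positive integer n, every Latin square L of order n, and every critical set C of L, the cardinality of C satisfies |C| ≥ n·⌊(1/2)·(log n)^{1/3}⌋, where log denotes the natural logarithm and ⌊·⌋ is the floor function. In particular, scs(n), the size of a smallest critical set in a Latin square of order n, is at least n·⌊(1/2)·(log n)^{1/3}⌋. -/
/-- `L` is a Latin square on `Q`: every row and column is a bijection. -/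
def IsLatinSquare {Q : Type*} (L : Q → Q → Q) : Prop :=
  (∀ i, Function.Bijective (L i)) ∧ (∀ j, Function.Bijective fun i => L i j)

/-- The set of triples `C` is contained in (the set of triples of) the
Latin square `L`. -/
def ContainedIn {Q : Type*} (C : Set (Q × Q × Q)) (L : Q → Q → Q) : Prop :=
  ∀ t ∈ C, L t.1 t.2.1 = t.2.2

/-- `C` is a critical set of the Latin square `L`: `C` is contained in `L`,
`L` is the only Latin square containing `C`, and no proper subset of `C`
has this property. -/
def IsCriticalSet {Q : Type*} (C : Set (Q × Q × Q)) (L : Q → Q → Q) : Prop :=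
  ContainedIn C L ∧
  (∀ L' : Q → Q → Q, IsLatinSquare L' → ContainedIn C L' → L' = L) ∧
  (∀ C' : Set (Q × Q × Q), C' ⊂ C →
    ∃ L' : Q → Q → Q, IsLatinSquare L' ∧ ContainedIn C' L' ∧ L' ≠ L)

/-- Two elements `u`, `v` are linked by bijections `f`, `g` off the set `D` when some set `J` disjoint
from `D` contains `f u` and `g v`, but neither `g u` nor `f v`, and contains both or neither of
`f w` and `g w` for every other `w`. -/
def Linked {U V : Type*} (f g : U ≃ V) (D : Set V) (u v : U) : Prop :=
  ∃ J : Set V, Disjoint J D ∧ f u ∈ J ∧ g u ∉ J ∧ f v ∉ J ∧ g v ∈ J ∧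
    ∀ w, w ≠ u → w ≠ v → (f w ∈ J ↔ g w ∈ J)

theorem linked_of_pow_apply_eq {U V : Type*} (f g : U ≃ V) (D : Set V) {u v : U} (huv : u ≠ v)
    (t : ℕ) (ht : ((f.trans g.symm : Equiv.Perm U) ^ t) u = v)
    (hD : ∀ i < t, f (((f.trans g.symm : Equiv.Perm U) ^ i) u) ∉ D) : Linked f g D u v := by
  classical
  set σ : Equiv.Perm U := f.trans g.symm with hσ
  have hex : ∃ t, (σ ^ t) u = v := ⟨t, ht⟩
  obtain ⟨s, hs, hst, hmin⟩ : ∃ s, (σ ^ s) u = v ∧ s ≤ t ∧ ∀ i < s, (σ ^ i) u ≠ v :=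
    ⟨Nat.find hex, Nat.find_spec hex, Nat.find_min' hex ht, fun i hi => Nat.find_min hex hi⟩
  have hs0 : 0 < s := by
    rcases Nat.eq_zero_or_pos s with rfl | h
    · exact absurd (by simpa using hs) huv
    · exact h
  set S : Set U := {w | ∃ i < s, (σ ^ i) u = w} with hS
  have hf : ∀ w, f w ∈ f '' S ↔ w ∈ S := fun w => f.injective.mem_set_image
  have hstep : ∀ i w, (σ ^ i) u = σ.symm w ↔ (σ ^ (i + 1)) u = w := by
    intro i w
    rw [Equiv.eq_symm_apply, pow_succ', Equiv.Perm.mul_apply]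
  have hg : ∀ w, g w ∈ f '' S ↔ ∃ i < s, (σ ^ (i + 1)) u = w := by
    intro w
    have : g w = f (σ.symm w) := by simp [hσ]
    rw [this, hf]
    simp only [hS, Set.mem_ofPred_eq, hstep]
  refine ⟨f '' S, ?_, ?_, ?_, ?_, ?_, ?_⟩
  · rw [Set.disjoint_left]
    rintro _ ⟨w, ⟨i, hi, rfl⟩, rfl⟩
    exact hD i (hi.trans_le hst)
  · exact (hf u).2 ⟨0, hs0, by simp⟩
  · rw [hg]
    rintro ⟨i, hi, h⟩
    have h2 : (σ ^ (s - (i + 1))) u = v := by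
      rw [← hs, ← Nat.sub_add_cancel (show i + 1 ≤ s from hi), pow_add, Equiv.Perm.mul_apply, h,
        Nat.sub_add_cancel (show i + 1 ≤ s from hi)]
    exact hmin _ (by omega) h2
  · rw [hf]
    rintro ⟨i, hi, h⟩
    exact hmin i hi h
  · rw [hg]
    exact ⟨s - 1, by omega, by rw [Nat.sub_add_cancel hs0, hs]⟩
  · intro w hwu hwv
    rw [hf, hg]
    constructor
    · rintro ⟨i, hi, h⟩
      rcases i with _ | i
      · exact absurd (by simpa using h.symm) hwu
      · exact ⟨i, by omega, h⟩
    · rintro ⟨i, hi, h⟩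
      refine ⟨i + 1, ?_, h⟩
      rcases Nat.lt_or_ge (i + 1) s with h1 | h1
      · exact h1
      · obtain rfl : i + 1 = s := by omega
        exact absurd (h.symm.trans hs) hwv

/-- If no nonempty set off `D` is balanced between `f` and `g`, then `D` labels the domain in such
a way that elements with equal labels are linked. -/
theorem exists_label {U V : Type*} [Finite U] (f g : U ≃ V) (D : Set V)
    (h : ∀ J : Set V, J.Nonempty → Disjoint J D → ¬ ∀ w, f w ∈ J ↔ g w ∈ J) :
    ∃ l : U → V, (∀ u, l u ∈ D) ∧
      ∀ u v, l u = l v → u ≠ v → Linked f g D u v ∨ Linked f g D v u := by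
  classical
  set σ : Equiv.Perm U := f.trans g.symm with hσ
  have hit : ∀ u, ∃ i, f ((σ ^ i) u) ∈ D := by
    intro u
    by_contra! hu
    refine h (f '' {w | σ.SameCycle u w}) ⟨f u, u, Equiv.Perm.SameCycle.refl _ _, rfl⟩ ?_ ?_
    · rw [Set.disjoint_left]
      rintro _ ⟨w, hw, rfl⟩
      obtain ⟨i, rfl⟩ := Equiv.Perm.SameCycle.exists_nat_pow_eq hw
      exact hu i
    · intro w
      have hw : g w = f (σ.symm w) := by simp [hσ]
      rw [hw, f.injective.mem_set_image, f.injective.mem_set_image]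
      exact (Equiv.Perm.sameCycle_symm_apply_right (f := σ)).symm
  have key : ∀ u v, u ≠ v →
      (σ ^ Nat.find (hit u)) u = (σ ^ Nat.find (hit v)) v →
      Nat.find (hit v) ≤ Nat.find (hit u) → Linked f g D u v := by
    intro u v huv he hle
    refine linked_of_pow_apply_eq f g D huv (Nat.find (hit u) - Nat.find (hit v)) ?_ ?_
    · apply (σ ^ Nat.find (hit v)).injective
      rw [← he, ← Equiv.Perm.mul_apply, ← pow_add, Nat.add_sub_cancel' hle]
    · intro i hi
      exact Nat.find_min (hit u) (by omega)
  refine ⟨fun u => f ((σ ^ Nat.find (hit u)) u), fun u => Nat.find_spec (hit u), ?_⟩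
  intro u v he huv
  have he' := f.injective he
  rcases le_total (Nat.find (hit v)) (Nat.find (hit u)) with hle | hle
  · exact Or.inl (key u v huv he' hle)
  · exact Or.inr (key v u huv.symm he'.symm hle)

namespace IsLatinSquare

variable {Q : Type*} {L : Q → Q → Q}

/-- The column in which a given symbol occurs in the row `r`. -/
noncomputable def colEquiv (hL : IsLatinSquare L) (r : Q) : Q ≃ Q :=
  (Equiv.ofBijective (L r) (hL.1 r)).symm

theorem apply_colEquiv (hL : IsLatinSquare L) (r s : Q) : L r (hL.colEquiv r s) = s :=
  (Equiv.ofBijective (L r) (hL.1 r)).apply_symm_apply s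

theorem colEquiv_apply (hL : IsLatinSquare L) (r j : Q) : hL.colEquiv r (L r j) = j :=
  (Equiv.ofBijective (L r) (hL.1 r)).symm_apply_apply j

/-- The column in which the symbol `s` occurs in a given row. -/
noncomputable def symbolEquiv [Finite Q] (hL : IsLatinSquare L) (s : Q) : Q ≃ Q :=
  Equiv.ofBijective (fun r => hL.colEquiv r s) <| Finite.injective_iff_bijective.1 fun r r' h => by
    apply (hL.2 (hL.colEquiv r s)).injective
    change L r _ = L r' _
    rw [hL.apply_colEquiv]
    rw [h, hL.apply_colEquiv]

theorem symbolEquiv_apply [Finite Q] (hL : IsLatinSquare L) (s r : Q) :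
    hL.symbolEquiv s r = hL.colEquiv r s := rfl

open Classical in
/-- Interchange the rows `a`, `b` in the columns of `J`, then the symbols `x`, `y` in the
columns of `K`. -/
noncomputable def _root_.interchange (L : Q → Q → Q) (a b x y : Q) (J K : Set Q) (r j : Q) : Q :=
  (if j ∈ K then Equiv.swap x y else 1) (L ((if j ∈ J then Equiv.swap a b else 1) r) j)

theorem interchange_of_forall_surjective [Finite Q] (hL : IsLatinSquare L) (a b x y : Q) (J K : Set Q)
    (h : ∀ r s, ∃ j, interchange L a b x y J K r j = s) :
    IsLatinSquare (interchange L a b x y J K) := by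
  classical
  refine ⟨fun r => Finite.surjective_iff_bijective.1 (h r), fun j => ?_⟩
  exact (Equiv.bijective _).comp ((hL.2 j).comp (Equiv.bijective _))

theorem containedIn_interchange {C : Set (Q × Q × Q)} (hC : ContainedIn C L) (a b x y : Q)
    (J K : Set Q) (hJ : ∀ t ∈ C, t.1 = a ∨ t.1 = b → t.2.1 ∉ J)
    (hK : ∀ t ∈ C, t.2.2 = x ∨ t.2.2 = y → t.2.1 ∉ K) :
    ContainedIn C (interchange L a b x y J K) := by
  classical
  intro t ht
  have h1 : (if t.2.1 ∈ J then Equiv.swap a b else 1) t.1 = t.1 := by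
    split_ifs with h
    · exact Equiv.swap_apply_of_ne_of_ne (fun e => hJ t ht (Or.inl e) h)
        (fun e => hJ t ht (Or.inr e) h)
    · rfl
  rw [interchange, h1, hC t ht]
  split_ifs with h
  · exact Equiv.swap_apply_of_ne_of_ne (fun e => hK t ht (Or.inl e) h)
      (fun e => hK t ht (Or.inr e) h)
  · rfl

/-- Interchanging two rows along a set of columns balanced between them. -/
theorem interchange_rows [Finite Q] (hL : IsLatinSquare L) (a b x : Q) (J : Set Q)
    (hJ : ∀ w, hL.colEquiv a w ∈ J ↔ hL.colEquiv b w ∈ J) :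
    IsLatinSquare (interchange L a b x x J ∅) := by
  classical
  apply hL.interchange_of_forall_surjective
  intro r s
  by_cases hr : hL.colEquiv r s ∈ J
  · refine ⟨hL.colEquiv (Equiv.swap a b r) s, ?_⟩
    have h : hL.colEquiv (Equiv.swap a b r) s ∈ J := by
      have := hJ s
      rw [Equiv.swap_apply_def]
      split_ifs with h1 h2
      · subst h1; tauto
      · subst h2; tauto
      · exact hr
    simp [interchange, h, hL.apply_colEquiv]
  · exact ⟨hL.colEquiv r s, by simp [interchange, hr, hL.apply_colEquiv]⟩

/-- Interchanging two symbols along a set of columns balanced between them. -/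
theorem interchange_symbols [Finite Q] (hL : IsLatinSquare L) (a x y : Q) (K : Set Q)
    (hK : ∀ r, hL.colEquiv r x ∈ K ↔ hL.colEquiv r y ∈ K) :
    IsLatinSquare (interchange L a a x y ∅ K) := by
  classical
  apply hL.interchange_of_forall_surjective
  intro r s
  by_cases hr : hL.colEquiv r s ∈ K
  · refine ⟨hL.colEquiv r (Equiv.swap x y s), ?_⟩
    have h : hL.colEquiv r (Equiv.swap x y s) ∈ K := by
      have := hK r
      rw [Equiv.swap_apply_def]
      split_ifs with h1 h2
      · subst h1; tauto
      · subst h2; tauto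
      · exact hr
    simp [interchange, h, hL.apply_colEquiv]
  · exact ⟨hL.colEquiv r s, by simp [interchange, hr, hL.apply_colEquiv]⟩

theorem interchange_isLatinSquare [Finite Q] (hL : IsLatinSquare L) {a b x y : Q} {J K : Set Q}
    (hab : a ≠ b) (hxy : x ≠ y)
    (hax : hL.colEquiv a x ∈ J) (hbx : hL.colEquiv b x ∉ J)
    (hay : hL.colEquiv a y ∉ J) (hby : hL.colEquiv b y ∈ J)
    (hJ : ∀ w, w ≠ x → w ≠ y → (hL.colEquiv a w ∈ J ↔ hL.colEquiv b w ∈ J))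
    (hx : hL.colEquiv a x ∈ K ↔ hL.colEquiv b x ∉ K)
    (hy : hL.colEquiv a y ∈ K ↔ hL.colEquiv b y ∉ K)
    (hK : ∀ r, r ≠ a → r ≠ b → (hL.colEquiv r x ∈ K ↔ hL.colEquiv r y ∈ K)) :
    IsLatinSquare (interchange L a b x y J K) := by
  classical
  have ev : ∀ r r' s s' : Q,
      (if hL.colEquiv r' s' ∈ J then Equiv.swap a b else 1) r = r' →
      (if hL.colEquiv r' s' ∈ K then Equiv.swap x y else 1) s' = s →
      ∃ j, interchange L a b x y J K r j = s := by
    intro r r' s s' h1 h2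
    exact ⟨hL.colEquiv r' s', by rw [interchange, h1, hL.apply_colEquiv, h2]⟩
  apply hL.interchange_of_forall_surjective
  intro r s
  by_cases hra : r = a
  · subst hra
    by_cases hsx : s = x
    · subst hsx
      by_cases h : hL.colEquiv r y ∈ K
      · exact ev r r s y (by simp [hay]) (by simp [h])
      · exact ev r b s y (by simp [hby]) (by simp [show hL.colEquiv b y ∈ K by tauto])
    by_cases hsy : s = y
    · subst hsy
      by_cases h : hL.colEquiv r s ∈ K
      · exact ev r b s s (by simp [hby]) (by simp [show hL.colEquiv b s ∉ K by tauto])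
      · exact ev r r s s (by simp [hay]) (by simp [h])
    have hfix : ∀ r', (if hL.colEquiv r' s ∈ K then Equiv.swap x y else 1) s = s := by
      intro r'
      split_ifs
      · exact Equiv.swap_apply_of_ne_of_ne hsx hsy
      · rfl
    by_cases h : hL.colEquiv r s ∈ J
    · exact ev r b s s (by simp [(hJ s hsx hsy).1 h]) (hfix b)
    · exact ev r r s s (by simp [h]) (hfix r)
  by_cases hrb : r = b
  · subst hrb
    by_cases hsx : s = x
    · subst hsx
      by_cases h : hL.colEquiv a s ∈ K
      · exact ev r r s s (by simp [hbx]) (by simp [hx.1 h])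
      · exact ev r a s s (by simp [hax]) (by simp [h])
    by_cases hsy : s = y
    · subst hsy
      by_cases h : hL.colEquiv a x ∈ K
      · exact ev r a s x (by simp [hax]) (by simp [h])
      · exact ev r r s x (by simp [hbx]) (by simp [show hL.colEquiv r x ∈ K by tauto])
    have hfix : ∀ r', (if hL.colEquiv r' s ∈ K then Equiv.swap x y else 1) s = s := by
      intro r'
      split_ifs
      · exact Equiv.swap_apply_of_ne_of_ne hsx hsy
      · rfl
    by_cases h : hL.colEquiv r s ∈ J
    · exact ev r a s s (by simp [(hJ s hsx hsy).2 h]) (hfix a)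
    · exact ev r r s s (by simp [h]) (hfix r)
  have hfix : ∀ j, (if j ∈ J then Equiv.swap a b else 1) r = r := by
    intro j
    split_ifs
    · exact Equiv.swap_apply_of_ne_of_ne hra hrb
    · rfl
  by_cases hsx : s = x
  · subst hsx
    by_cases h : hL.colEquiv r s ∈ K
    · exact ev r r s y (hfix _) (by simp [(hK r hra hrb).1 h])
    · exact ev r r s s (hfix _) (by simp [h])
  by_cases hsy : s = y
  · subst hsy
    by_cases h : hL.colEquiv r s ∈ K
    · exact ev r r s x (hfix _) (by simp [(hK r hra hrb).2 h])
    · exact ev r r s s (hfix _) (by simp [h])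
  refine ev r r s s (hfix _) ?_
  split_ifs
  · exact Equiv.swap_apply_of_ne_of_ne hsx hsy
  · rfl

/-- The columns in which `C` meets one of the rows `a`, `b`. -/
def _root_.rowPairColumns (C : Set (Q × Q × Q)) (a b : Q) : Set Q :=
  {j | ∃ t ∈ C, (t.1 = a ∨ t.1 = b) ∧ t.2.1 = j}

/-- The columns in which `C` contains one of the symbols `x`, `y`. -/
def _root_.symbolPairColumns (C : Set (Q × Q × Q)) (x y : Q) : Set Q :=
  {j | ∃ t ∈ C, (t.2.2 = x ∨ t.2.2 = y) ∧ t.2.1 = j}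

variable {C : Set (Q × Q × Q)}

theorem exists_row_label [Finite Q] (hL : IsLatinSquare L) (hC : ContainedIn C L)
    (huniq : ∀ L' : Q → Q → Q, IsLatinSquare L' → ContainedIn C L' → L' = L) {a b : Q}
    (hab : a ≠ b) :
    ∃ l : Q → Q, (∀ x, l x ∈ rowPairColumns C a b) ∧ ∀ x y, l x = l y → x ≠ y →
      Linked (hL.colEquiv a) (hL.colEquiv b) (rowPairColumns C a b) x y ∨
      Linked (hL.colEquiv a) (hL.colEquiv b) (rowPairColumns C a b) y x := by
  classical
  apply exists_label
  rintro J ⟨j, hj⟩ hd hJ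
  have h := huniq _ (hL.interchange_rows a b a J hJ)
    (containedIn_interchange hC a b a a J ∅
      (fun t ht h hJ => Set.disjoint_left.1 hd hJ ⟨t, ht, h, rfl⟩) (by simp))
  have h2 := congrFun (congrFun h a) j
  simp only [interchange, hj, if_true, Set.mem_empty_iff_false, if_false,
    Equiv.swap_apply_left, Equiv.Perm.one_apply] at h2
  exact hab ((hL.2 j).injective h2).symm

theorem exists_symbol_label [Finite Q] (hL : IsLatinSquare L) (hC : ContainedIn C L)
    (huniq : ∀ L' : Q → Q → Q, IsLatinSquare L' → ContainedIn C L' → L' = L) {x y : Q}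
    (hxy : x ≠ y) :
    ∃ l : Q → Q, (∀ a, l a ∈ symbolPairColumns C x y) ∧ ∀ a b, l a = l b → a ≠ b →
      Linked (hL.symbolEquiv x) (hL.symbolEquiv y) (symbolPairColumns C x y) a b ∨
      Linked (hL.symbolEquiv x) (hL.symbolEquiv y) (symbolPairColumns C x y) b a := by
  classical
  apply exists_label
  rintro K ⟨j, hj⟩ hd hK
  have h := huniq _ (hL.interchange_symbols x x y K hK)
    (containedIn_interchange hC x x x y ∅ K (by simp)
      (fun t ht h hK => Set.disjoint_left.1 hd hK ⟨t, ht, h, rfl⟩))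
  obtain ⟨r, hr⟩ := (hL.2 j).surjective x
  have h2 := congrFun (congrFun h r) j
  simp only at hr
  simp only [interchange, hj, if_true, Set.mem_empty_iff_false, if_false,
    Equiv.swap_apply_left, Equiv.Perm.one_apply, hr] at h2
  exact hxy h2.symm

/-- Under unique completion, symbols linked by a pair of rows cannot in turn link those rows. -/
theorem not_linked_of_unique [Finite Q] (hL : IsLatinSquare L) (hC : ContainedIn C L)
    (huniq : ∀ L' : Q → Q → Q, IsLatinSquare L' → ContainedIn C L' → L' = L) {a b x y : Q}
    (hab : a ≠ b) (hxy : x ≠ y) (hne : L b (hL.colEquiv a x) ≠ y)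
    (hJ : Linked (hL.colEquiv a) (hL.colEquiv b) (rowPairColumns C a b) x y) :
    ¬ (Linked (hL.symbolEquiv x) (hL.symbolEquiv y) (symbolPairColumns C x y) a b ∨
      Linked (hL.symbolEquiv x) (hL.symbolEquiv y) (symbolPairColumns C x y) b a) := by
  classical
  intro hK
  obtain ⟨J, hJd, hax, hbx, hay, hby, hJ⟩ := hJ
  obtain ⟨K, hKd, hx, hy, hK⟩ : ∃ K : Set Q, Disjoint K (symbolPairColumns C x y) ∧
      (hL.colEquiv a x ∈ K ↔ hL.colEquiv b x ∉ K) ∧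
      (hL.colEquiv a y ∈ K ↔ hL.colEquiv b y ∉ K) ∧
      ∀ r, r ≠ a → r ≠ b → (hL.colEquiv r x ∈ K ↔ hL.colEquiv r y ∈ K) := by
    simp only [Linked, symbolEquiv_apply] at hK
    rcases hK with ⟨K, hKd, h1, h2, h3, h4, h5⟩ | ⟨K, hKd, h1, h2, h3, h4, h5⟩
    · exact ⟨K, hKd, by tauto, by tauto, h5⟩
    · exact ⟨K, hKd, by tauto, by tauto, fun r hr hr' => h5 r hr' hr⟩
  have h := huniq _ (hL.interchange_isLatinSquare hab hxy hax hbx hay hby hJ hx hy hK)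
    (containedIn_interchange hC a b x y J K
      (fun t ht h hJ => Set.disjoint_left.1 hJd hJ ⟨t, ht, h, rfl⟩)
      (fun t ht h hK => Set.disjoint_left.1 hKd hK ⟨t, ht, h, rfl⟩))
  have h2 := congrFun (congrFun h b) (hL.colEquiv a x)
  simp only [interchange, hax, if_true, Equiv.swap_apply_right, hL.apply_colEquiv] at h2
  have hne' : L b (hL.colEquiv a x) ≠ x := by
    intro e
    exact hab ((hL.2 (hL.colEquiv a x)).injective ((hL.apply_colEquiv a x).trans e.symm))
  split_ifs at h2
  · rw [Equiv.swap_apply_left] at h2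
    exact hne h2.symm
  · exact hne' h2.symm

/-- Under unique completion, more than `d` rows of which any two meet `C` in at most `d` columns
bound the number of symbols any two of which meet `C` in at most `d` columns. -/
theorem card_le_of_unique [Finite Q] (hL : IsLatinSquare L) (hC : ContainedIn C L)
    (huniq : ∀ L' : Q → Q → Q, IsLatinSquare L' → ContainedIn C L' → L' = L) (d : ℕ)
    (A X : Finset Q) (hA : d < A.card)
    (hrow : ∀ a ∈ A, ∀ b ∈ A, (rowPairColumns C a b).ncard ≤ d)
    (hsym : ∀ x ∈ X, ∀ y ∈ X, (symbolPairColumns C x y).ncard ≤ d) :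
    X.card ≤ d ^ (A.card * A.card - A.card) * A.card ^ 2 := by
  classical
  by_contra! hX
  obtain ⟨a₀, ha₀⟩ : A.Nonempty := Finset.card_pos.1 (by omega)
  have : Nonempty Q := ⟨a₀⟩
  choose! l hl hlink using fun (p : Q × Q) (hp : p.1 ≠ p.2) =>
    hL.exists_row_label hC huniq hp
  have hfin : ∀ S : Set Q, S.Finite := fun S => S.toFinite
  let T : Finset (A.offDiag → Q) :=
    Fintype.piFinset fun p => (hfin (rowPairColumns C p.1.1 p.1.2)).toFinset
  have hT : T.card ≤ d ^ (A.card * A.card - A.card) := by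
    rw [Fintype.card_piFinset, ← Finset.offDiag_card, ← Fintype.card_coe A.offDiag,
      ← Finset.card_univ]
    refine Finset.prod_le_pow_card _ _ _ fun p _ => ?_
    rw [← Set.ncard_eq_toFinset_card]
    have hp := Finset.mem_offDiag.1 p.2
    exact hrow _ hp.1 _ hp.2.1
  obtain ⟨φ, -, hφ⟩ := Finset.exists_lt_card_fiber_of_mul_lt_card_of_maps_to
    (s := X) (t := T) (f := fun x (p : A.offDiag) => l p.1 x) (n := A.card ^ 2)
    (by
      intro x _
      refine Fintype.mem_piFinset.2 fun p => ?_
      rw [Set.Finite.mem_toFinset]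
      exact hl _ (Finset.mem_offDiag.1 p.2).2.2 x)
    (lt_of_le_of_lt (Nat.mul_le_mul_right _ hT) hX)
  set Y := {x ∈ X | (fun p : A.offDiag => l p.1 x) = φ} with hY
  obtain ⟨x, hx⟩ : Y.Nonempty := Finset.card_pos.1 (by omega)
  obtain ⟨y, hy, hyx⟩ : ∃ y ∈ Y, y ∉ (A ×ˢ A).image fun p => L p.2 (hL.colEquiv p.1 x) := by
    apply Finset.exists_mem_notMem_of_card_lt_card
    calc _ ≤ (A ×ˢ A).card := Finset.card_image_le
      _ = A.card ^ 2 := by rw [Finset.card_product, sq]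
      _ < _ := hφ
  have hne : ∀ a ∈ A, ∀ b ∈ A, L b (hL.colEquiv a x) ≠ y := fun a ha b hb e =>
    hyx (Finset.mem_image.2 ⟨(a, b), Finset.mk_mem_product ha hb, e⟩)
  have hne' : ∀ a ∈ A, ∀ b ∈ A, L b (hL.colEquiv a y) ≠ x := by
    intro a ha b hb e
    apply hne b hb a ha
    have : hL.colEquiv b x = hL.colEquiv a y := by rw [← e, hL.colEquiv_apply]
    rw [this, hL.apply_colEquiv]
  rw [hY, Finset.mem_filter] at hx hy
  have hxy : x ≠ y := by simpa [hL.apply_colEquiv] using hne a₀ ha₀ a₀ ha₀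
  obtain ⟨m, hm, hmlink⟩ := hL.exists_symbol_label hC huniq hxy
  obtain ⟨a, ha, b, hb, hab, hmab⟩ := Finset.exists_ne_map_eq_of_card_lt_of_maps_to
    (s := A) (t := (hfin (symbolPairColumns C x y)).toFinset) (f := m)
    (by
      rw [← Set.ncard_eq_toFinset_card]
      exact (hsym x hx.1 y hy.1).trans_lt hA)
    (fun r _ => by simpa using hm r)
  have hlab : l (a, b) x = l (a, b) y :=
    congrFun (hx.2.trans hy.2.symm) ⟨(a, b), Finset.mem_offDiag.2 ⟨ha, hb, hab⟩⟩
  have hK := hmlink a b hmab hab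
  rcases hlink (a, b) hab x y hlab hxy with hJ | hJ
  · exact hL.not_linked_of_unique hC huniq hab hxy (hne a ha b hb) hJ hK
  · have hswap : ∀ r r',
        Linked (hL.symbolEquiv x) (hL.symbolEquiv y) (symbolPairColumns C x y) r r' →
        Linked (hL.symbolEquiv y) (hL.symbolEquiv x) (symbolPairColumns C y x) r' r := by
      rintro r r' ⟨K, hd, h1, h2, h3, h4, h5⟩
      refine ⟨K, ?_, h4, h3, h2, h1, fun w hw hw' => (h5 w hw' hw).symm⟩
      simpa only [symbolPairColumns, or_comm] using hd
    exact hL.not_linked_of_unique hC huniq hab hxy.symm (hne' a ha b hb) hJ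
      (hK.symm.imp (hswap b a) (hswap a b))

end IsLatinSquare

/-- If a set has fewer than `k * n` elements, then more than `n / (k + 1)` of the `n` fibres of a map
have at most `k` elements. -/
theorem lt_card_small_fibers {T Q : Type*} [Fintype Q] [DecidableEq Q] (s : Finset T) (f : T → Q)
    (k : ℕ) (h : s.card < k * Fintype.card Q) :
    Fintype.card Q < (Finset.univ.filter fun q => {t ∈ s | f t = q}.card ≤ k).card * (k + 1) := by
  classical
  have hsum : s.card = ∑ q, {t ∈ s | f t = q}.card :=
    Finset.card_eq_sum_card_fiberwise fun _ _ => Finset.mem_coe.2 (Finset.mem_univ _)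
  have hpart := Finset.card_filter_add_card_filter_not (s := (Finset.univ : Finset Q))
    (fun q => {t ∈ s | f t = q}.card ≤ k)
  have hle : (Finset.univ.filter fun q => ¬ {t ∈ s | f t = q}.card ≤ k).card * (k + 1) ≤ s.card := by
    rw [hsum, ← smul_eq_mul]
    refine (Finset.card_nsmul_le_sum _ _ (k + 1) fun q hq => ?_).trans
      (Finset.sum_le_sum_of_subset (Finset.subset_univ _))
    have := (Finset.mem_filter.1 hq).2
    omega
  rw [Finset.card_univ] at hpart
  nlinarith

theorem numeric_bound {k n : ℕ} (hk : 0 < k) (h : 8 * (k : ℝ) ^ 3 ≤ Real.log n) (hn : 0 < n) :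
    (2 * k) ^ ((2 * k + 1) * (2 * k + 1) - (2 * k + 1)) * (2 * k + 1) ^ 2 * (k + 1) ≤ n := by
  have h1 : 2 * k ≤ 2 ^ k := by
    obtain ⟨j, rfl⟩ : ∃ j, k = j + 1 := ⟨k - 1, by omega⟩
    have := Nat.lt_two_pow_self (n := j)
    rw [pow_succ]
    omega
  have h2 : k + 1 ≤ 2 ^ k := Nat.lt_two_pow_self
  have h3 : 2 * k + 1 ≤ 2 ^ (2 * k) := Nat.lt_two_pow_self
  have he : (2 * k + 1) * (2 * k + 1) - (2 * k + 1) = (2 * k + 1) * (2 * k) := by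
    rw [← Nat.mul_sub_one, Nat.add_sub_cancel]
  have hk2 : k ^ 2 ≤ k ^ 3 := Nat.pow_le_pow_right hk (by norm_num)
  have hk1 : k ≤ k ^ 3 := Nat.le_self_pow (by norm_num) k
  have hnat : (2 * k) ^ ((2 * k + 1) * (2 * k + 1) - (2 * k + 1)) * (2 * k + 1) ^ 2 * (k + 1) ≤
      (2 ^ 11) ^ (k ^ 3) := by
    calc _ ≤ (2 ^ k) ^ ((2 * k + 1) * (2 * k)) * (2 ^ (2 * k)) ^ 2 * 2 ^ k := by
          rw [he]; gcongr
      _ = 2 ^ (4 * k ^ 3 + 2 * k ^ 2 + 5 * k) := by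
          simp only [← pow_mul, ← pow_add]
          congr 1
          ring
      _ ≤ 2 ^ (11 * k ^ 3) := Nat.pow_le_pow_right (by norm_num) (by omega)
      _ = _ := by rw [pow_mul]
  have hexp : (2 : ℝ) ^ 11 ≤ Real.exp 8 := by
    have h8 : Real.exp 8 = Real.exp 1 ^ 8 := by rw [← Real.exp_nat_mul]; norm_num
    rw [h8]
    calc (2 : ℝ) ^ 11 ≤ 2.7 ^ 8 := by norm_num
      _ ≤ _ := pow_le_pow_left₀ (by norm_num) (by linarith [Real.exp_one_gt_d9]) 8
  have hreal : ((2 : ℝ) ^ 11) ^ (k ^ 3) ≤ n := by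
    calc ((2 : ℝ) ^ 11) ^ (k ^ 3) ≤ Real.exp 8 ^ (k ^ 3) := by gcongr
      _ = Real.exp (8 * (k : ℝ) ^ 3) := by
          rw [← Real.exp_nat_mul]; congr 1; push_cast; ring
      _ ≤ Real.exp (Real.log n) := Real.exp_le_exp.2 h
      _ = n := Real.exp_log (by exact_mod_cast hn)
  exact hnat.trans (by exact_mod_cast hreal)

/-- every critical set `C` of a Latin square of order `n ≥ 1`
satisfies `|C| ≥ n·⌊(1/2)·(log n)^{1/3}⌋`; in particular
`scs(n) ≥ n·⌊(1/2)·(log n)^{1/3}⌋`. -/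
theorem criticalSet_lower_bound (n : ℕ) (hn : 0 < n)
    (L : Fin n → Fin n → Fin n) (hL : IsLatinSquare L)
    (C : Set (Fin n × Fin n × Fin n)) (hC : IsCriticalSet C L) :
    n * ⌊(1 / 2 : ℝ) * Real.log n ^ ((1 : ℝ) / 3)⌋₊ ≤ C.ncard := by
  classical
  obtain ⟨hcon, huniq, -⟩ := hC
  set k := ⌊(1 / 2 : ℝ) * Real.log n ^ ((1 : ℝ) / 3)⌋₊ with hk
  rcases Nat.eq_zero_or_pos k with h0 | hpos
  · simp [h0]
  have hlog : 0 ≤ Real.log n := Real.log_natCast_nonneg n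
  have hklog : 8 * (k : ℝ) ^ 3 ≤ Real.log n := by
    have h1 : (k : ℝ) ≤ (1 / 2 : ℝ) * Real.log n ^ ((1 : ℝ) / 3) :=
      Nat.floor_le (by positivity)
    have h2 : (Real.log n ^ ((1 : ℝ) / 3)) ^ 3 = Real.log n := by
      rw [← Real.rpow_natCast, ← Real.rpow_mul hlog]
      norm_num
    calc 8 * (k : ℝ) ^ 3 = (2 * k) ^ 3 := by ring
      _ ≤ (Real.log n ^ ((1 : ℝ) / 3)) ^ 3 := by gcongr; linarith
      _ = _ := h2
  have hnum := numeric_bound hpos hklog hn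
  by_contra! hlt
  set s : Finset (Fin n × Fin n × Fin n) := C.toFinite.toFinset with hs
  have hscard : s.card < k * Fintype.card (Fin n) := by
    rw [hs, ← Set.ncard_eq_toFinset_card, Fintype.card_fin, mul_comm]
    exact hlt
  have hrows := lt_card_small_fibers s (fun t => t.1) k hscard
  have hsyms := lt_card_small_fibers s (fun t => t.2.2) k hscard
  set R := Finset.univ.filter fun q : Fin n => {t ∈ s | t.1 = q}.card ≤ k with hR
  set X := Finset.univ.filter fun q : Fin n => {t ∈ s | t.2.2 = q}.card ≤ k with hXdef
  rw [Fintype.card_fin] at hrows hsyms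
  have hRcard : 2 * k + 1 ≤ R.card := by
    have h1 : 1 ≤ (2 * k) ^ ((2 * k + 1) * (2 * k + 1) - (2 * k + 1)) :=
      Nat.one_le_pow _ _ (by omega)
    have h2 : (2 * k + 1) * (k + 1) ≤ R.card * (k + 1) := by
      calc (2 * k + 1) * (k + 1) ≤ (1 * (2 * k + 1) ^ 2) * (k + 1) := by
            gcongr; nlinarith
        _ ≤ _ := Nat.mul_le_mul_right _ (Nat.mul_le_mul_right _ h1)
        _ ≤ n := hnum
        _ ≤ _ := hrows.le
    exact Nat.le_of_mul_le_mul_right h2 (by omega)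
  obtain ⟨A, hAR, hAcard⟩ := Finset.exists_subset_card_eq hRcard
  have hpair : ∀ (f : Fin n × Fin n × Fin n → Fin n) (a b : Fin n),
      {t ∈ s | f t = a}.card ≤ k → {t ∈ s | f t = b}.card ≤ k →
      {j | ∃ t ∈ C, (f t = a ∨ f t = b) ∧ t.2.1 = j}.ncard ≤ 2 * k := by
    intro f a b ha hb
    calc _ ≤ ((({t ∈ s | f t = a} ∪ {t ∈ s | f t = b}).image fun t => t.2.1 :
            Finset (Fin n)) : Set (Fin n)).ncard := by
          refine Set.ncard_le_ncard ?_ (Finset.finite_toSet _)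
          rintro j ⟨t, ht, h, rfl⟩
          have hts : t ∈ s := by simpa [hs] using ht
          simp only [Finset.coe_image, Set.mem_image, Finset.mem_coe, Finset.mem_union,
            Finset.mem_filter]
          exact ⟨t, h.imp (fun e => ⟨hts, e⟩) (fun e => ⟨hts, e⟩), rfl⟩
      _ ≤ _ := by
          rw [Set.ncard_coe_finset]
          refine Finset.card_image_le.trans ((Finset.card_union_le _ _).trans ?_)
          omega
  have hbound := hL.card_le_of_unique hcon huniq (2 * k) A X (by omega)
    (fun a ha b hb => hpair (fun t => t.1) a b (Finset.mem_filter.1 (hAR ha)).2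
      (Finset.mem_filter.1 (hAR hb)).2)
    (fun x hx y hy => hpair (fun t => t.2.2) x y (Finset.mem_filter.1 hx).2
      (Finset.mem_filter.1 hy).2)
  rw [hAcard] at hbound
  exact absurd (hsyms.trans_le (Nat.mul_le_mul_right _ hbound)) (by omega)
end
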